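/- arXiv:1504.07506 — 5 statements merged into one kernel-verified Lean document; each statement's English description precedes it below -/
import Mathlib

section
/- Let P be a finite partially ordered set of cardinality n ≥ 2 that is order-isomorphic to a cartesian product of chains P₁, P₂, …, P_t (with the componentwise order), where P_i is a chain of cardinality k_i. Then every antichain of P has cardinality at most (n/2^K)·binom(K, ⌊K/2⌋), where K = Σ_{i=1}^{t} (k_i − 1). -/
/-- The Clebsch–Gordan operator of a chain with `k` elements: if the odd function `f` counts the
chains that cover `Fin l × Q` for every `l`, then `chainSum k f` does so for `Fin k × Q`. -/
def chainSum (k : ℕ) (f : ℤ → ℤ) (x : ℤ) : ℤ :=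
  ∑ i ∈ Finset.range k, f (x + k - 1 - 2 * i)

theorem chainSum_zero (f : ℤ → ℤ) (x : ℤ) : chainSum 0 f x = 0 := by simp [chainSum]

theorem chainSum_succ (k : ℕ) (f : ℤ → ℤ) (x : ℤ) :
    chainSum (k + 1) f x = f (x + k) + chainSum k f (x - 1) := by
  unfold chainSum
  rw [Finset.sum_range_succ', add_comm]
  congr 1
  · congr 1; push_cast; ring
  · refine Finset.sum_congr rfl fun i _ => ?_
    congr 1; push_cast; ring

theorem chainSum_two (f : ℤ → ℤ) (x : ℤ) : chainSum 2 f x = f (x + 1) + f (x - 1) := by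
  simp [chainSum_succ, chainSum_zero]

theorem chainSum_comm (j k : ℕ) (f : ℤ → ℤ) :
    chainSum j (chainSum k f) = chainSum k (chainSum j f) := by
  funext x
  unfold chainSum
  rw [Finset.sum_comm]
  refine Finset.sum_congr rfl fun i _ => Finset.sum_congr rfl fun i' _ => ?_
  congr 1; ring

theorem Function.Odd.chainSum {f : ℤ → ℤ} (hf : f.Odd) (k : ℕ) : (chainSum k f).Odd := by
  intro x
  unfold _root_.chainSum
  rw [← Finset.sum_range_reflect, ← Finset.sum_neg_distrib]
  refine Finset.sum_congr rfl fun i hi => ?_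
  rw [← hf]
  congr 1
  have := Finset.mem_range.1 hi
  omega

theorem chainSum_apply_one {f : ℤ → ℤ} (hf : f.Odd) (k : ℕ) :
    chainSum (k + 1) f 1 = f (k + 1) := by
  rw [chainSum_succ, sub_self, (hf.chainSum k).map_zero, add_zero, add_comm]

theorem chainSum_nonneg {f : ℤ → ℤ} (hf : f.Odd) (h : ∀ x, 0 ≤ x → 0 ≤ f x) (k : ℕ) :
    ∀ x, 0 ≤ x → 0 ≤ chainSum k f x := by
  induction k with
  | zero => intro x _; rw [chainSum_zero]
  | succ k ih =>
    intro x hx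
    rcases hx.eq_or_lt with rfl | hx
    · rw [(hf.chainSum _).map_zero]
    · rw [chainSum_succ]
      exact add_nonneg (h _ (by omega)) (ih _ (by omega))

/-- Odd functions on `ℤ` that are concave on the nonnegative integers. -/
structure OddConcave (g : ℤ → ℤ) : Prop where
  odd : g.Odd
  concave : ∀ x, 0 ≤ x → 0 ≤ 2 * g x - g (x + 1) - g (x - 1)

theorem OddConcave.chainSum {g : ℤ → ℤ} (hg : OddConcave g) (k : ℕ) :
    OddConcave (chainSum k g) := by
  refine ⟨hg.odd.chainSum k, fun x hx => ?_⟩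
  have hodd : (fun y => 2 * g y - g (y + 1) - g (y - 1)).Odd := by
    intro y
    have h₁ := hg.odd y
    have h₂ := hg.odd (y + 1)
    have h₃ := hg.odd (y - 1)
    rw [show -(y + 1) = -y - 1 by ring] at h₂
    rw [show -(y - 1) = -y + 1 by ring] at h₃
    simp only [h₁, h₂, h₃]
    ring
  refine (chainSum_nonneg hodd hg.concave k x hx).trans_eq ?_
  unfold _root_.chainSum
  rw [Finset.mul_sum, ← Finset.sum_sub_distrib, ← Finset.sum_sub_distrib]
  refine Finset.sum_congr rfl fun i _ => ?_
  rw [show x + 1 + k - 1 - 2 * (i : ℤ) = x + k - 1 - 2 * i + 1 by ring,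
    show x - 1 + k - 1 - 2 * (i : ℤ) = x + k - 1 - 2 * i - 1 by ring]

theorem OddConcave.mul_succ_le {g : ℤ → ℤ} (hg : OddConcave g) (j : ℕ) :
    (j : ℤ) * g (j + 1) ≤ (j + 1) * g j := by
  induction j with
  | zero => simp [hg.odd.map_zero]
  | succ j ih =>
    have h := hg.concave (j + 1) (by omega)
    rw [add_sub_cancel_right] at h
    push_cast
    nlinarith

theorem OddConcave.mul_add_two_le {g : ℤ → ℤ} (hg : OddConcave g) (k : ℕ) :
    (k : ℤ) * g (k + 2) ≤ (k + 2) * g k := by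
  have h₁ := hg.mul_succ_le k
  have h₂ := hg.mul_succ_le (k + 1)
  push_cast at h₂
  rw [show (k : ℤ) + 1 + 1 = k + 2 by ring] at h₂
  have hk : (0 : ℤ) ≤ k := by omega
  refine le_of_mul_le_mul_left ?_ (show (0 : ℤ) < k + 1 by omega)
  nlinarith [mul_le_mul_of_nonneg_left h₂ hk,
    mul_le_mul_of_nonneg_left h₁ (show (0 : ℤ) ≤ k + 2 by omega)]

/-- Replacing a chain with `k + 1` elements by the Boolean lattice of rank `k` does not decrease
the normalised value at `1`. -/
theorem OddConcave.chainSum_le_iterate (k : ℕ) {g : ℤ → ℤ} (hg : OddConcave g) :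
    _root_.chainSum (k + 1) g 1 * 2 ^ k ≤ (k + 1) * (_root_.chainSum 2)^[k] g 1 := by
  induction k generalizing g with
  | zero => simp [_root_.chainSum]
  | succ k ih =>
    have h := ih (hg.chainSum 2)
    rw [chainSum_apply_one (hg.chainSum 2).odd, chainSum_two, add_sub_cancel_right] at h
    rw [chainSum_apply_one hg.odd, Function.iterate_succ_apply]
    have h' := hg.mul_add_two_le k
    push_cast
    rw [show (k : ℤ) + 1 + 1 = k + 2 by ring] at h ⊢
    refine le_of_mul_le_mul_left ?_ (show (0 : ℤ) < k + 1 by omega)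
    have hp : (0 : ℤ) ≤ 2 ^ k := by positivity
    calc (k + 1 : ℤ) * (g (k + 2) * 2 ^ (k + 1))
        = (2 * (k + 1) * g (k + 2)) * 2 ^ k := by ring
      _ ≤ ((k + 2) * (g (k + 2) + g k)) * 2 ^ k :=
          mul_le_mul_of_nonneg_right (by linarith) hp
      _ = (k + 2) * ((g (k + 2) + g k) * 2 ^ k) := by ring
      _ ≤ (k + 2) * ((k + 1) * (_root_.chainSum 2)^[k] (_root_.chainSum 2 g) 1) :=
          mul_le_mul_of_nonneg_left h (by omega)
      _ = _ := by ring

theorem OddConcave.foldr {g : ℤ → ℤ} (hg : OddConcave g) (ks : List ℕ) :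
    OddConcave (ks.foldr _root_.chainSum g) := by
  induction ks with
  | nil => exact hg
  | cons k ks ih => exact ih.chainSum k

theorem OddConcave.iterate {g : ℤ → ℤ} (hg : OddConcave g) (m : ℕ) :
    OddConcave ((_root_.chainSum 2)^[m] g) := by
  induction m with
  | zero => exact hg
  | succ m ih => rw [Function.iterate_succ_apply']; exact ih.chainSum 2

theorem iterate_chainSum_foldr (m : ℕ) (ks : List ℕ) (g : ℤ → ℤ) :
    (chainSum 2)^[m] (ks.foldr chainSum g) = ks.foldr chainSum ((chainSum 2)^[m] g) := by
  induction ks with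
  | nil => rfl
  | cons k ks ih =>
    have hc : Function.Commute (chainSum 2) (chainSum k) := chainSum_comm 2 k
    rw [List.foldr_cons, List.foldr_cons, ← ih]
    exact hc.iterate_left m _

theorem OddConcave.foldr_le_iterate (ks : List ℕ) (hks : ∀ k ∈ ks, 1 ≤ k) {g : ℤ → ℤ}
    (hg : OddConcave g) :
    ks.foldr _root_.chainSum g 1 * 2 ^ (ks.map (· - 1)).sum ≤
      ks.prod * (_root_.chainSum 2)^[(ks.map (· - 1)).sum] g 1 := by
  induction ks generalizing g with
  | nil => simp
  | cons k ks ih =>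
    obtain ⟨m, rfl⟩ : ∃ m, k = m + 1 := ⟨k - 1, by have := hks k (by simp); omega⟩
    have h₁ := (hg.foldr ks).chainSum_le_iterate m
    have h₂ := ih (fun k hk => hks k (by simp [hk])) (hg.iterate m)
    rw [iterate_chainSum_foldr] at h₁
    simp only [List.foldr_cons, List.map_cons, List.sum_cons, List.prod_cons, add_tsub_cancel_right]
    rw [← Function.iterate_add_apply] at h₂
    generalize (ks.map (· - 1)).sum = S at *
    rw [add_comm m S, Nat.cast_mul, Nat.cast_add_one]
    calc _ = (_root_.chainSum (m + 1) (ks.foldr _root_.chainSum g) 1 * 2 ^ m) * 2 ^ S := by ring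
      _ ≤ _ := mul_le_mul_of_nonneg_right h₁ (by positivity)
      _ = (m + 1) * (ks.foldr _root_.chainSum ((_root_.chainSum 2)^[m] g) 1 * 2 ^ S) := by ring
      _ ≤ _ := mul_le_mul_of_nonneg_left h₂ (by positivity)
      _ = _ := by ring

theorem oddConcave_sign : OddConcave Int.sign := by
  refine ⟨fun x => Int.sign_neg x, fun x hx => ?_⟩
  rcases hx.eq_or_lt with rfl | hx
  · decide
  · have h₁ : (x + 1).sign = 1 := Int.sign_eq_one_of_pos (by omega)
    have h₂ : x.sign = 1 := Int.sign_eq_one_of_pos hx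
    have h₃ : 0 ≤ (x - 1).sign := Int.sign_nonneg_iff.2 (by omega)
    have h₄ : (x - 1).sign ≤ 1 := by
      rcases Int.sign_trichotomy (x - 1) with h | h | h <;> omega
    omega

theorem iterate_chainSum_two_add (m : ℕ) (f g : ℤ → ℤ) :
    (chainSum 2)^[m] (f + g) = (chainSum 2)^[m] f + (chainSum 2)^[m] g := by
  induction m with
  | zero => rfl
  | succ m ih =>
    simp only [Function.iterate_succ_apply', ih]
    funext x
    simp only [chainSum_two, Pi.add_apply]
    ring

theorem iterate_chainSum_two_shift (m : ℕ) (f : ℤ → ℤ) (x : ℤ) :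
    (chainSum 2)^[m] f (x + 1) = (chainSum 2)^[m] (fun y => f (y + 1)) x := by
  induction m generalizing x with
  | zero => rfl
  | succ m ih =>
    simp only [Function.iterate_succ_apply', chainSum_two, ← ih]
    rw [sub_add_cancel, add_sub_cancel_right]

theorem iterate_chainSum_two_indicator (m : ℕ) (x : ℤ) :
    (chainSum 2)^[m] (fun y => if y / 2 = 0 then 1 else 0) x =
      if 0 ≤ (m + x) / 2 then (m.choose ((m + x) / 2).toNat : ℤ) else 0 := by
  induction m generalizing x with
  | zero =>
    simp only [Function.iterate_zero, id_eq, Nat.cast_zero, zero_add]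
    rcases lt_trichotomy (x / 2) 0 with h | h | h
    · rw [if_neg (by omega), if_neg (by omega)]
    · simp [h]
    · rw [if_neg (by omega), if_pos (by omega), Nat.choose_eq_zero_of_lt (by omega)]
      rfl
  | succ m ih =>
    rw [Function.iterate_succ_apply', chainSum_two, ih, ih]
    rw [show (m + (x + 1) : ℤ) / 2 = ((m + 1 : ℕ) + x) / 2 by congr 1; push_cast; ring,
      show (m + (x - 1) : ℤ) / 2 = ((m + 1 : ℕ) + x) / 2 - 1 by omega]
    generalize ((m + 1 : ℕ) + x) / 2 = z
    rcases lt_trichotomy z 0 with h | rfl | h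
    · rw [if_neg (by omega), if_neg (by omega), if_neg (by omega), add_zero]
    · simp
    · obtain ⟨j, rfl⟩ : ∃ j : ℕ, z = j + 1 := ⟨(z - 1).toNat, by omega⟩
      rw [if_pos (by omega), if_pos (by omega), if_pos (by omega), add_sub_cancel_right,
        Int.toNat_natCast, show ((j : ℤ) + 1).toNat = j + 1 by omega, Nat.choose_succ_succ]
      push_cast
      ring

theorem iterate_chainSum_two_sign (m : ℕ) :
    (chainSum 2)^[m] Int.sign 1 = m.choose (m / 2) := by
  let φ : ℤ → ℤ := fun y => if y / 2 = 0 then 1 else 0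
  let ψ : ℤ → ℤ := fun y => (y + 1).sign - φ y
  have hψ : ψ.Odd := by
    intro y
    have h (z : ℤ) : ψ z = if 2 ≤ z then 1 else if z ≤ -2 then -1 else 0 := by
      simp only [ψ, φ]
      rcases lt_trichotomy (z + 1) 0 with hz | hz | hz
      · rw [Int.sign_eq_neg_one_of_neg hz]; grind
      · rw [hz, Int.sign_zero]; grind
      · rw [Int.sign_eq_one_of_pos hz]; grind
    rw [h, h]
    grind
  have hψm : ((chainSum 2)^[m] ψ).Odd := by
    induction m with
    | zero => exact hψ
    | succ m ih => rw [Function.iterate_succ_apply']; exact ih.chainSum 2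
  have hs : (fun y : ℤ => (y + 1).sign) = φ + ψ := by
    funext y
    simp [ψ]
  have h1 := iterate_chainSum_two_shift m Int.sign 0
  rw [zero_add] at h1
  rw [h1, hs, iterate_chainSum_two_add, Pi.add_apply, hψm.map_zero, add_zero,
    iterate_chainSum_two_indicator, add_zero, if_pos (by omega)]
  congr 2

/-- `f l` bounds the size of the antichains of `Fin l × Q`, for every `l`. -/
def AntichainBound (Q : Type*) [PartialOrder Q] (f : ℤ → ℤ) : Prop :=
  ∀ (l : ℕ) (A : Finset (ℕ × Q)), (∀ p ∈ A, p.1 < l) →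
    IsAntichain (· ≤ ·) (A : Set (ℕ × Q)) → (A.card : ℤ) ≤ f l

/-- A map whose comparable values come from comparable points sends an antichain bijectively onto
an antichain. -/
theorem IsAntichain.finset_image {α β : Type*} [PartialOrder α] [PartialOrder β] [DecidableEq β]
    {A : Finset α} (hA : IsAntichain (· ≤ ·) (A : Set α)) (φ : α → β)
    (hφ : ∀ a ∈ A, ∀ b ∈ A, φ a ≤ φ b → a ≤ b ∨ b ≤ a) :
    IsAntichain (· ≤ ·) (A.image φ : Set β) ∧ (A.image φ).card = A.card := by
  have key : ∀ a ∈ A, ∀ b ∈ A, φ a ≤ φ b → a = b := fun a ha b hb h =>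
    (hφ a ha b hb h).elim (hA.eq ha hb) fun h => (hA.eq hb ha h).symm
  refine ⟨?_, Finset.card_image_of_injOn fun a ha b hb h => key a ha b hb h.le⟩
  intro x hx y hy hne hle
  obtain ⟨a, ha, rfl⟩ := Finset.mem_image.1 (Finset.mem_coe.1 hx)
  obtain ⟨b, hb, rfl⟩ := Finset.mem_image.1 (Finset.mem_coe.1 hy)
  exact hne (congrArg φ (key a ha b hb hle))

/-- The grid `l × k` is peeled into hooks, which are chains with `l + k - 1 - 2 * i` elements. -/
theorem AntichainBound.card_le_chainSum {Q : Type*} [PartialOrder Q] {f : ℤ → ℤ} (hf : f.Odd)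
    (hQ : AntichainBound Q f) (k l : ℕ) (A : Finset (ℕ × ℕ × Q))
    (hl : ∀ p ∈ A, p.1 < l) (hk : ∀ p ∈ A, p.2.1 < k)
    (hA : IsAntichain (· ≤ ·) (A : Set (ℕ × ℕ × Q))) :
    (A.card : ℤ) ≤ chainSum k f l := by
  classical
  induction k generalizing l A with
  | zero =>
    have : A = ∅ := Finset.eq_empty_of_forall_notMem fun p hp => by simpa using hk p hp
    simp [this, chainSum_zero]
  | succ k ih =>
    cases l with
    | zero =>
      have : A = ∅ := Finset.eq_empty_of_forall_notMem fun p hp => by simpa using hl p hp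
      simp [this, (hf.chainSum _).map_zero]
    | succ l =>
      let hook : ℕ × ℕ × Q → Prop := fun p => p.1 = l ∨ p.2.1 = 0
      have hsplit := Finset.card_filter_add_card_filter_not (s := A) hook
      have hhook : ((A.filter hook).card : ℤ) ≤ f ((l + 1 : ℕ) + k) := by
        obtain ⟨h₁, h₂⟩ := IsAntichain.finset_image (A := A.filter hook)
          (hA.subset (Finset.coe_subset.2 (Finset.filter_subset _ _)))
          (fun p => (p.1 + p.2.1, p.2.2)) (by
            rintro ⟨a, b, q⟩ hp ⟨a', b', q'⟩ hp' ⟨hab, hq⟩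
            have := hl _ (Finset.mem_filter.1 hp).1
            have := hl _ (Finset.mem_filter.1 hp').1
            have hp := (Finset.mem_filter.1 hp).2
            have hp' := (Finset.mem_filter.1 hp').2
            simp only [hook] at *
            exact Or.inl ⟨by dsimp only; omega, by dsimp only; omega, hq⟩)
        rw [← h₂]
        refine (hQ (l + 1 + k) _ ?_ h₁).trans_eq (by push_cast; rfl)
        intro x hx
        obtain ⟨p, hp, rfl⟩ := Finset.mem_image.1 hx
        have := hl _ (Finset.mem_filter.1 hp).1
        have := hk _ (Finset.mem_filter.1 hp).1
        dsimp only
        omega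
      have hrest : ((A.filter (¬ hook ·)).card : ℤ) ≤ chainSum k f l := by
        obtain ⟨h₁, h₂⟩ := IsAntichain.finset_image (A := A.filter (¬ hook ·))
          (hA.subset (Finset.coe_subset.2 (Finset.filter_subset _ _)))
          (fun p => (p.1, p.2.1 - 1, p.2.2)) (by
            rintro ⟨a, b, q⟩ hp ⟨a', b', q'⟩ hp' ⟨ha, hb, hq⟩
            have hp := (Finset.mem_filter.1 hp).2
            have hp' := (Finset.mem_filter.1 hp').2
            simp only [hook] at *
            exact Or.inl ⟨ha, by dsimp only; omega, hq⟩)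
        rw [← h₂]
        refine ih l _ ?_ ?_ h₁ <;>
        · intro x hx
          obtain ⟨p, hp, rfl⟩ := Finset.mem_image.1 hx
          have := hl _ (Finset.mem_filter.1 hp).1
          have := hk _ (Finset.mem_filter.1 hp).1
          have hp := (Finset.mem_filter.1 hp).2
          simp only [hook] at *
          omega
      rw [chainSum_succ, show ((l + 1 : ℕ) : ℤ) - 1 = l by push_cast; ring]
      rw [← hsplit]
      push_cast at hhook ⊢
      exact add_le_add hhook hrest

theorem antichainBound_of_subsingleton (Q : Type*) [PartialOrder Q] [Subsingleton Q] :
    AntichainBound Q Int.sign := by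
  intro l A hl hA
  have hle : A.card ≤ 1 := Finset.card_le_one.2 fun a ha b hb => by
    rcases le_total a.1 b.1 with h | h
    · exact hA.eq ha hb ⟨h, (Subsingleton.elim _ _).le⟩
    · exact (hA.eq hb ha ⟨h, (Subsingleton.elim _ _).le⟩).symm
  rcases Nat.eq_zero_or_pos l with rfl | h
  · have : A = ∅ := Finset.eq_empty_of_forall_notMem fun p hp => by simpa using hl p hp
    simp [this]
  · rw [Int.sign_eq_one_of_pos (by omega)]
    exact_mod_cast hle

theorem antichainBound_pi (t : ℕ) (C : Fin t → Type*) [∀ i, LinearOrder (C i)]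
    [∀ i, Fintype (C i)] :
    AntichainBound (∀ i, C i)
      ((List.ofFn fun i => Fintype.card (C i)).foldr chainSum Int.sign) := by
  classical
  induction t with
  | zero => exact antichainBound_of_subsingleton _
  | succ t ih =>
    intro l A hl hA
    rw [List.ofFn_succ, List.foldr_cons]
    let r : C 0 ≃o Fin (Fintype.card (C 0)) := (Fintype.orderIsoFinOfCardEq (C 0) rfl).symm
    obtain ⟨h₁, h₂⟩ := hA.finset_image
      (fun p => (p.1, ((r (p.2 0) : ℕ), fun i : Fin t => p.2 i.succ))) (by
        rintro ⟨a, q⟩ - ⟨a', q'⟩ - ⟨ha, hq₀, hq⟩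
        exact Or.inl ⟨ha, fun i => Fin.cases (r.le_iff_le.1 hq₀) hq i⟩)
    rw [← h₂]
    refine AntichainBound.card_le_chainSum (oddConcave_sign.foldr _).odd
      (ih fun i => C i.succ) _ l _ ?_ ?_ h₁ <;>
    · intro x hx
      obtain ⟨p, hp, rfl⟩ := Finset.mem_image.1 hx
      first | exact hl p hp | exact (r (p.2 0)).isLt

/-- Let `P` be a finite partially ordered set of cardinality `n ≥ 2` that is order-isomorphic
to the cartesian product (with componentwise order) of chains `C 1, …, C t`, where `C i` is a
chain (totally ordered set) of cardinality `k i`.  Then every antichain of `P` has cardinality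
at most `(n / 2^K) · binom(K, ⌊K/2⌋)`, where `K = ∑ i (k i − 1)`. -/
theorem stmt_8 (P : Type*) [PartialOrder P] [Fintype P] (n : ℕ) (hn : 2 ≤ n)
    (hcard : Fintype.card P = n)
    (t : ℕ) (C : Fin t → Type*) [∀ i, LinearOrder (C i)] [∀ i, Fintype (C i)]
    (k : Fin t → ℕ) (hk : ∀ i, Fintype.card (C i) = k i)
    (e : P ≃o ((i : Fin t) → C i))
    (A : Set P) (hA : IsAntichain (· ≤ ·) A) :
    (Nat.card A : ℝ) ≤
      (n : ℝ) / 2 ^ (∑ i, (k i - 1)) * (∑ i, (k i - 1)).choose ((∑ i, (k i - 1)) / 2) := by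
  classical
  have hP : Nonempty P := Fintype.card_pos_iff.1 (by omega)
  have hpos : ∀ i, 1 ≤ k i := fun i => by
    rw [← hk i]
    exact Fintype.card_pos_iff.2 ⟨e hP.some i⟩
  obtain rfl : k = fun i => Fintype.card (C i) := funext fun i => (hk i).symm
  have hn' : n = ∏ i, Fintype.card (C i) := by
    rw [← hcard, Fintype.card_congr e.toEquiv, Fintype.card_pi]
  have hcardA : (Nat.card A : ℤ) ≤
      (List.ofFn fun i => Fintype.card (C i)).foldr chainSum Int.sign 1 := by
    obtain ⟨h₁, h₂⟩ := IsAntichain.finset_image (A := A.toFinset) (by simpa using hA)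
      (fun p => ((0 : ℕ), e p)) (fun a _ b _ h => Or.inl (e.le_iff_le.1 (Prod.mk_le_mk.1 h).2))
    rw [Nat.card_eq_card_toFinset, ← h₂]
    refine antichainBound_pi t C 1 _ (fun x hx => ?_) h₁
    obtain ⟨p, -, rfl⟩ := Finset.mem_image.1 hx
    exact Nat.one_pos
  have hmain := oddConcave_sign.foldr_le_iterate (List.ofFn fun i => Fintype.card (C i))
    (by simpa [List.mem_ofFn] using hpos)
  rw [List.map_ofFn, List.sum_ofFn, List.prod_ofFn, ← hn', iterate_chainSum_two_sign] at hmain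
  simp only [Function.comp_apply] at hmain
  generalize ∑ i, (Fintype.card (C i) - 1) = K at *
  have hfin : (Nat.card A : ℤ) * 2 ^ K ≤ n * K.choose (K / 2) :=
    (mul_le_mul_of_nonneg_right hcardA (by positivity)).trans hmain
  rw [div_mul_eq_mul_div, le_div_iff₀ (by positivity)]
  exact_mod_cast hfin
end

section
/- Let P be a finite partially ordered set of cardinality n ≥ 2 that is order-isomorphic to a cartesian product of t chains (with the componentwise order). Then every antichain of P has cardinality at most ⌊b·n/√(log n)⌋, where b := √(2/π). Furthermore, if each of the t chains has the same cardinality p, then every antichain of P has cardinality at most ⌊b·p^t/√(t(p−1))⌋. -/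
open Finset

/-- The preorder `P` is covered by finitely many chains with lengths `ℓ i` such that
`g h` is twice the sum of the lengths truncated at `h`, extended to an odd function of `h`. -/
def HasChainCover (P : Type*) [Preorder P] (g : ℤ → ℤ) : Prop :=
  ∃ (ι : Type) (_ : Fintype ι) (ℓ : ι → ℕ) (f : ι → ℕ → P),
    (∀ i, 0 < ℓ i) ∧ (∀ i, Monotone (f i)) ∧ (∀ x, ∃ i, ∃ c < ℓ i, f i c = x) ∧
      ∀ h, g h = ∑ i, (|h + ℓ i| - |h - ℓ i|)

theorem HasChainCover.map {P Q : Type*} [Preorder P] [Preorder Q] {g : ℤ → ℤ}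
    (hP : HasChainCover P g) (φ : P → Q) (hφ : Monotone φ) (hs : Function.Surjective φ) :
    HasChainCover Q g := by
  obtain ⟨ι, _, ℓ, f, hℓ, hf, hcov, hg⟩ := hP
  refine ⟨ι, _, ℓ, fun i c => φ (f i c), hℓ, fun i => hφ.comp (hf i), fun y => ?_, hg⟩
  obtain ⟨x, rfl⟩ := hs y
  obtain ⟨i, c, hc, rfl⟩ := hcov x
  exact ⟨i, c, hc, rfl⟩

theorem HasChainCover.odd {P : Type*} [Preorder P] {g : ℤ → ℤ} (hP : HasChainCover P g) (h : ℤ) :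
    g (-h) = -g h := by
  obtain ⟨ι, _, ℓ, f, -, -, -, hg⟩ := hP
  rw [hg, hg, ← sum_neg_distrib]
  refine sum_congr rfl fun i _ => ?_
  rw [← abs_neg (-h + (ℓ i : ℤ)), ← abs_neg (-h - (ℓ i : ℤ))]
  ring_nf

theorem HasChainCover.card_antichain_le {P : Type*} [PartialOrder P] {g : ℤ → ℤ}
    (hP : HasChainCover P g) {A : Set P} (hA : IsAntichain (· ≤ ·) A) :
    2 * (Nat.card A : ℤ) ≤ g 1 := by
  obtain ⟨ι, _, ℓ, f, hℓ, hf, hcov, hg⟩ := hP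
  choose i c _ hx using hcov
  have hinj : Function.Injective fun a : A => i a := by
    rintro ⟨a, ha⟩ ⟨b, hb⟩ (hab : i a = i b)
    refine Subtype.ext ?_
    rcases le_total (c a) (c b) with h | h
    · refine hA.eq ha hb ?_
      have := hf (i a) h
      rwa [hx a, hab, hx b] at this
    · refine (hA.eq hb ha ?_).symm
      have := hf (i a) h
      rwa [hx a, hab, hx b] at this
  have hle : Nat.card A ≤ Fintype.card ι := by
    simpa using Nat.card_le_card_of_injective _ hinj
  have hterm : ∀ j ∈ (univ : Finset ι), |(1 : ℤ) + ℓ j| - |(1 : ℤ) - ℓ j| = 2 := fun j _ => by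
    have := hℓ j
    rw [abs_of_nonneg (by omega), abs_of_nonpos (by omega)]
    ring
  rw [hg, sum_congr rfl hterm]
  simp only [sum_const, card_univ, nsmul_eq_mul]
  omega

/-- A sum of an odd function over a symmetric progression vanishes. -/
theorem sum_range_odd_eq_zero {M : Type*} [AddCommGroup M] [IsAddTorsionFree M] {f : ℤ → M}
    (hf : ∀ x, f (-x) = -f x) (k : ℕ) : ∑ j ∈ range (k + 1), f (k - 2 * j) = 0 := by
  rw [← self_eq_neg, ← sum_neg_distrib, ← sum_flip]
  refine sum_congr rfl fun j hj => ?_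
  have : j ≤ k := by simpa [Nat.lt_succ_iff] using hj
  rw [← hf]
  congr 1
  push_cast [this]
  ring

/-- Summing an odd function along a progression of step two, only the terms with index below
`m` survive. -/
theorem sum_range_min_odd {M : Type*} [AddCommGroup M] [IsAddTorsionFree M] {f : ℤ → M}
    (hf : ∀ x, f (-x) = -f x) (m k : ℕ) :
    ∑ j ∈ range (min m (k + 1)), f (m + k - 2 * j) = ∑ j ∈ range (k + 1), f (m + k - 2 * j) := by
  rcases le_or_gt (k + 1) m with h | h
  · rw [min_eq_right h]
  · obtain ⟨r, rfl⟩ := Nat.exists_eq_add_of_le (Nat.lt_succ_iff.1 h)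
    rw [min_eq_left h.le, add_assoc, sum_range_add, left_eq_add]
    rw [← sum_range_odd_eq_zero hf r]
    refine sum_congr rfl fun j _ => ?_
    congr 1
    push_cast
    ring

theorem sum_range_abs_symm (x : ℤ) (k : ℕ) :
    ∑ j ∈ range (k + 1), |x + k - 2 * j| = ∑ j ∈ range (k + 1), |-x + k - 2 * j| := by
  rw [← sum_flip]
  refine sum_congr rfl fun j hj => ?_
  have : j ≤ k := by simpa [Nat.lt_succ_iff] using hj
  rw [← abs_neg]
  congr 1
  push_cast [this]
  ring

theorem sum_truncated_hook_lengths (h : ℤ) (ℓ k : ℕ) :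
    ∑ j ∈ range (min ℓ (k + 1)), (|h + (ℓ + k - 2 * j : ℤ)| - |h - (ℓ + k - 2 * j : ℤ)|) =
      ∑ j ∈ range (k + 1), (|h + k - 2 * j + ℓ| - |h + k - 2 * j - ℓ|) := by
  rw [sum_range_min_odd (f := fun x : ℤ => |h + x| - |h - x|) (fun x => by ring_nf) ℓ k,
    sum_sub_distrib, sum_sub_distrib]
  congr 1
  · refine sum_congr rfl fun j _ => ?_
    ring_nf
  · rw [sum_congr rfl fun (j : ℕ) _ => show |h - (ℓ + k - 2 * j : ℤ)| = |(ℓ - h) + k - 2 * j| by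
        rw [← abs_neg]; ring_nf, sum_range_abs_symm]
    refine sum_congr rfl fun j _ => ?_
    ring_nf

/-- The product of two chains is covered by hooks, which gives a chain cover of the product of
a chain with a poset covered by chains. -/
theorem HasChainCover.fin_prod {P : Type*} [Preorder P] {g : ℤ → ℤ} (hP : HasChainCover P g)
    (k : ℕ) : HasChainCover (Fin (k + 1) × P) fun h => ∑ j ∈ range (k + 1), g (h + k - 2 * j) := by
  obtain ⟨ι, _, ℓ, f, hℓ, hf, hcov, hg⟩ := hP
  refine ⟨Σ i, Fin (min (ℓ i) (k + 1)), inferInstance, fun q => ℓ q.1 + k - 2 * q.2,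
    fun q c => (⟨min k (q.2 + (c - (ℓ q.1 - 1 - q.2))), by omega⟩,
      f q.1 (min c (ℓ q.1 - 1 - q.2))), ?_, ?_, ?_, ?_⟩
  · rintro ⟨i, j, hj⟩
    dsimp only
    omega
  · rintro ⟨i, j, hj⟩ c d hcd
    refine Prod.mk_le_mk.2 ⟨?_, hf _ (min_le_min_right _ hcd)⟩
    rw [Fin.mk_le_mk]
    dsimp only
    omega
  · rintro ⟨⟨b, hb⟩, x⟩
    obtain ⟨i, a, ha, rfl⟩ := hcov x
    by_cases hab : a + b < ℓ i
    · refine ⟨⟨i, b, by omega⟩, a, by dsimp only; omega, ?_⟩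
      refine Prod.ext (Fin.ext ?_) (congrArg (f i) ?_) <;> dsimp only <;> omega
    · refine ⟨⟨i, ℓ i - 1 - a, by omega⟩, a + b - (ℓ i - 1 - a), by dsimp only; omega, ?_⟩
      refine Prod.ext (Fin.ext ?_) (congrArg (f i) ?_) <;> dsimp only <;> omega
  · intro h
    simp only [hg]
    rw [sum_comm, Fintype.sum_sigma]
    refine sum_congr rfl fun i _ => ?_
    rw [← sum_truncated_hook_lengths, ← Fin.sum_univ_eq_sum_range
      (fun j : ℕ => |h + (ℓ i + k - 2 * j : ℤ)| - |h - (ℓ i + k - 2 * j : ℤ)|)]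
    refine sum_congr rfl fun j _ => ?_
    have hj := j.2
    have : 2 * (j : ℕ) ≤ ℓ i + k := by omega
    push_cast [this]
    rfl

/-- The fraction of the Boolean lattice of dimension `N` in the `h` largest layers, extended to an
odd function of `h`. -/
noncomputable def centralMass : ℕ → ℤ → ℝ
  | 0, h => (h.sign : ℝ)
  | N + 1, h => (centralMass N (h + 1) + centralMass N (h - 1)) / 2

theorem centralMass_neg (N : ℕ) (h : ℤ) : centralMass N (-h) = -centralMass N h := by
  induction N generalizing h with
  | zero => simp [centralMass]
  | succ N ih =>
    simp only [centralMass]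
    rw [show -h + 1 = -(h - 1) by ring, show -h - 1 = -(h + 1) by ring, ih, ih]
    ring

theorem centralMass_zero_right (N : ℕ) : centralMass N 0 = 0 := by
  have := centralMass_neg N 0
  rw [neg_zero] at this
  linarith

/-- The increments of `centralMass N`: the normalized layer sizes of the Boolean lattice. -/
noncomputable def layerMass (N : ℕ) (u : ℤ) : ℝ := centralMass N (u + 1) - centralMass N u

theorem layerMass_succ (N : ℕ) (u : ℤ) :
    layerMass (N + 1) u = (layerMass N (u + 1) + layerMass N (u - 1)) / 2 := by
  simp only [layerMass, centralMass]
  ring_nf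

theorem layerMass_reflect (N : ℕ) (u : ℤ) : layerMass N (-1 - u) = layerMass N u := by
  simp only [layerMass]
  rw [show -1 - u + 1 = -u by ring, show -1 - u = -(u + 1) by ring, centralMass_neg,
    centralMass_neg]
  ring

theorem layerMass_zero_of_pos {u : ℤ} (hu : 0 < u) : layerMass 0 u = 0 := by
  simp only [layerMass, centralMass]
  rw [Int.sign_eq_one_of_pos hu, Int.sign_eq_one_of_pos (by omega)]
  simp

theorem layerMass_zero_zero : layerMass 0 0 = 1 := by
  simp [layerMass, centralMass]

theorem layerMass_zero_neg_one : layerMass 0 (-1) = 1 := by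
  simp [layerMass, centralMass]

theorem layerMass_succ_le (N : ℕ) {u : ℤ} (hu : 0 ≤ u) :
    layerMass N (u + 1) ≤ layerMass N u := by
  induction N generalizing u with
  | zero =>
    rw [layerMass_zero_of_pos (by omega)]
    rcases hu.eq_or_lt with rfl | hu
    · simp [layerMass_zero_zero]
    · rw [layerMass_zero_of_pos hu]
  | succ N ih =>
    rw [layerMass_succ, layerMass_succ, add_sub_cancel_right]
    have h₁ := ih (u := u + 1) (by omega)
    have h₂ : layerMass N u ≤ layerMass N (u - 1) := by
      rcases hu.eq_or_lt with rfl | hu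
      · exact (layerMass_reflect N 0).ge
      · simpa using ih (u := u - 1) (by omega)
    linarith

theorem layerMass_antitone (N : ℕ) {a b : ℤ} (hb : 0 ≤ b) (hab : b ≤ a) :
    layerMass N a ≤ layerMass N b := by
  induction a, hab using Int.leInduction with
  | base => rfl
  | succ n hn ih => exact (layerMass_succ_le N (hb.trans hn)).trans ih

theorem layerMass_le_of_central (N : ℕ) {a b : ℤ} (hab : b ≤ a) (hba : -1 - a ≤ b) :
    layerMass N a ≤ layerMass N b := by
  rcases le_or_gt 0 b with hb | hb
  · exact layerMass_antitone N hb hab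
  · rw [← layerMass_reflect N b]
    exact layerMass_antitone N (by omega) (by omega)

theorem centralMass_add_sub_antitone (N : ℕ) {h : ℤ} (hh : 0 ≤ h) {d d' : ℤ} (hd : 0 ≤ d)
    (hdd' : d ≤ d') :
    centralMass N (h + d') + centralMass N (h - d') ≤
      centralMass N (h + d) + centralMass N (h - d) := by
  induction d', hdd' using Int.leInduction with
  | base => rfl
  | succ n hn ih =>
    have := layerMass_le_of_central N (a := h + n) (b := h - (n + 1)) (by omega) (by omega)
    simp only [layerMass] at this
    rw [show h - (n + 1) + 1 = h - n by ring] at this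
    rw [← add_assoc]
    linarith

theorem sum_range_centralMass_ge (N k : ℕ) {h : ℤ} (hh : 0 ≤ h) :
    (k + 1) * (centralMass N (h + k) + centralMass N (h - k)) ≤
      2 * ∑ j ∈ range (k + 1), centralMass N (h + k - 2 * j) := by
  have hsum : 2 * ∑ j ∈ range (k + 1), centralMass N (h + k - 2 * j) =
      ∑ j ∈ range (k + 1),
        (centralMass N (h + (k - 2 * j)) + centralMass N (h - (k - 2 * j))) := by
    rw [sum_add_distrib, two_mul]
    congr 1
    · exact sum_congr rfl fun j _ => by rw [add_sub_assoc]
    · rw [← sum_flip]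
      refine sum_congr rfl fun j hj => ?_
      have : j ≤ k := by simpa [Nat.lt_succ_iff] using hj
      congr 1
      push_cast [this]
      ring
  rw [hsum]
  have := card_nsmul_le_sum (range (k + 1))
    (fun j : ℕ => centralMass N (h + (k - 2 * j)) + centralMass N (h - (k - 2 * j)))
    (centralMass N (h + k) + centralMass N (h - k)) fun j hj => by
      have hj : j ≤ k := by simpa [Nat.lt_succ_iff] using hj
      rcases le_total 0 ((k : ℤ) - 2 * j) with h0 | h0
      · exact centralMass_add_sub_antitone N hh h0 (by omega)
      · have := centralMass_add_sub_antitone N hh (d := -((k : ℤ) - 2 * j)) (d' := k)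
          (by omega) (by omega)
        rw [sub_neg_eq_add, ← sub_eq_add_neg] at this
        linarith
  simpa only [card_range, nsmul_eq_mul, Nat.cast_add, Nat.cast_one] using this

/-- Averaging `centralMass N` over a chain gives at most the average over a Boolean lattice of the
same rank. -/
theorem sum_range_centralMass_le (N k : ℕ) {h : ℤ} (hh : 0 ≤ h) :
    ∑ j ∈ range (k + 1), centralMass N (h + k - 2 * j) ≤ (k + 1) * centralMass (N + k) h := by
  induction k generalizing h with
  | zero => simp
  | succ k ih =>
    rcases hh.eq_or_lt with rfl | hpos
    · rw [centralMass_zero_right, mul_zero]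
      refine le_of_eq ?_
      rw [← sum_range_odd_eq_zero (centralMass_neg N) (k + 1)]
      simp
    · have h₁ := ih (h := h + 1) (by omega)
      have h₂ := ih (h := h - 1) (by omega)
      have h₃ := sum_range_centralMass_ge N (k + 1) hh
      have e₁ := sum_range_succ (fun j : ℕ => centralMass N (h + (k + 1 : ℕ) - 2 * j)) (k + 1)
      have e₂ := sum_range_succ' (fun j : ℕ => centralMass N (h + (k + 1 : ℕ) - 2 * j)) (k + 1)
      have s₁ : ∑ j ∈ range (k + 1), centralMass N (h + 1 + k - 2 * j) =
          ∑ j ∈ range (k + 1), centralMass N (h + (k + 1 : ℕ) - 2 * j) :=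
        sum_congr rfl fun j _ => by congr 1; push_cast; ring
      have s₂ : ∑ j ∈ range (k + 1), centralMass N (h - 1 + k - 2 * j) =
          ∑ j ∈ range (k + 1), centralMass N (h + (k + 1 : ℕ) - 2 * (j + 1 : ℕ)) :=
        sum_congr rfl fun j _ => by congr 1; push_cast; ring
      have t₁ : centralMass N (h + (k + 1 : ℕ) - 2 * (k + 1 : ℕ)) =
          centralMass N (h - (k + 1 : ℕ)) := by congr 1; ring
      have t₂ : centralMass N (h + (k + 1 : ℕ) - 2 * (0 : ℕ)) =
          centralMass N (h + (k + 1 : ℕ)) := by congr 1; ring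
      have hm : centralMass (N + (k + 1)) h =
        (centralMass (N + k) (h + 1) + centralMass (N + k) (h - 1)) / 2 := rfl
      rw [s₁] at h₁
      rw [s₂] at h₂
      rw [t₁] at e₁
      rw [t₂] at e₂
      rw [hm]
      set S := ∑ j ∈ range (k + 1 + 1), centralMass N (h + (k + 1 : ℕ) - 2 * j)
      set T := centralMass N (h + (k + 1 : ℕ)) + centralMass N (h - (k + 1 : ℕ)) with hT
      have key : 2 * S - T ≤
          (k + 1) * (centralMass (N + k) (h + 1) + centralMass (N + k) (h - 1)) := by
        rw [hT]; linarith
      push_cast at h₃ ⊢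
      have hk : (0 : ℝ) < k + 1 := by positivity
      have : (k + 1) * (2 * S) ≤ (k + 1) * ((k + 1 + 1) *
          (centralMass (N + k) (h + 1) + centralMass (N + k) (h - 1))) := by
        nlinarith [mul_le_mul_of_nonneg_left key (by positivity : (0 : ℝ) ≤ k + 1 + 1)]
      have := le_of_mul_le_mul_left this hk
      linarith

theorem layerMass_eq_zero {N : ℕ} {u : ℤ} (hu : N < u) : layerMass N u = 0 := by
  induction N generalizing u with
  | zero => exact layerMass_zero_of_pos (by simpa using hu)
  | succ N ih =>
    push_cast at hu
    rw [layerMass_succ, ih (by omega), ih (by omega)]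
    simp

theorem layerMass_eq_choose (N m : ℕ) :
    layerMass N (N - 2 * m) = N.choose m / 2 ^ N ∧
      layerMass N (N - 2 * m - 1) = N.choose m / 2 ^ N := by
  induction N generalizing m with
  | zero =>
    rcases m with _ | m
    · simp [layerMass_zero_zero, layerMass_zero_neg_one]
    · rw [← layerMass_reflect, ← layerMass_reflect 0 (_ - 1), layerMass_zero_of_pos,
        layerMass_zero_of_pos]
      · simp
      all_goals push_cast; omega
  | succ N ih =>
    rw [layerMass_succ, layerMass_succ]
    rcases m with _ | m
    · obtain ⟨h₁, h₂⟩ := ih 0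
      have h₃ : layerMass N (N + 2) = 0 := layerMass_eq_zero (by omega)
      have h₄ : layerMass N (N + 1) = 0 := layerMass_eq_zero (by omega)
      push_cast at *
      ring_nf at *
      rw [h₁, h₂, h₃, h₄]
      simp
    · obtain ⟨h₁, h₂⟩ := ih m
      obtain ⟨h₃, h₄⟩ := ih (m + 1)
      rw [Nat.choose_succ_succ]
      push_cast at *
      rw [show (N : ℤ) + 1 - 2 * (m + 1) + 1 = N - 2 * m by ring,
        show (N : ℤ) + 1 - 2 * (m + 1) - 1 = N - 2 * (m + 1) by ring,
        show (N : ℤ) - 2 * (m + 1) + 1 = N - 2 * m - 1 by ring, h₁, h₂, h₃, h₄, pow_succ]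
      constructor <;> ring

theorem centralMass_one (N : ℕ) : centralMass N 1 = N.choose (N / 2) / 2 ^ N := by
  have h : centralMass N 1 = layerMass N 0 := by simp [layerMass, centralMass_zero_right]
  obtain ⟨h₁, h₂⟩ := layerMass_eq_choose N (N / 2)
  rw [h]
  rcases Nat.mod_two_eq_zero_or_one N with hN | hN
  · rw [← h₁]; congr 1; omega
  · rw [← h₂]; congr 1; omega

theorem centralBinom_sq_mul_pi_le (m : ℕ) :
    ((m.centralBinom : ℝ) / 4 ^ m) ^ 2 * (Real.pi * m) ≤ 1 := by
  have hW := Real.Wallis.le_W m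
  have hC : ((m.centralBinom : ℝ) / 4 ^ m) ^ 2 * (Real.Wallis.W m * (2 * m + 1)) = 1 := by
    have hf := Nat.choose_mul_factorial_mul_factorial (n := 2 * m) (k := m) (by omega)
    rw [show 2 * m - m = m by omega, ← Nat.centralBinom_eq_two_mul_choose] at hf
    have hfR : (m.centralBinom : ℝ) * m.factorial * m.factorial = (2 * m).factorial := by
      exact_mod_cast hf
    have hm : (m.factorial : ℝ) ≠ 0 := by positivity
    have hc : (m.centralBinom : ℝ) ≠ 0 := by exact_mod_cast m.centralBinom_ne_zero
    rw [Real.Wallis.W_eq_factorial_ratio, ← hfR, show (4 : ℝ) = 2 ^ 2 by norm_num, ← pow_mul]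
    field_simp
    ring
  rw [← hC]
  refine mul_le_mul_of_nonneg_left ?_ (by positivity)
  refine le_trans ?_ (mul_le_mul_of_nonneg_right hW (by positivity))
  have hm : (0 : ℝ) < 2 * m + 2 := by positivity
  rw [div_mul_eq_mul_div, div_mul_eq_mul_div, le_div_iff₀ hm]
  nlinarith [Real.pi_pos]

theorem centralMass_one_le {N : ℕ} (hN : 0 < N) :
    centralMass N 1 ≤ Real.sqrt (2 / Real.pi) / Real.sqrt N := by
  rw [centralMass_one, ← Real.sqrt_div (by positivity)]
  apply Real.le_sqrt_of_sq_le
  have hN' : (0 : ℝ) < N := by exact_mod_cast hN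
  rw [div_div, le_div_iff₀ (by positivity)]
  obtain ⟨m, rfl | rfl⟩ := N.even_or_odd'
  · have := centralBinom_sq_mul_pi_le m
    rw [Nat.centralBinom_eq_two_mul_choose] at this
    rw [Nat.mul_div_cancel_left _ two_pos, pow_mul]
    norm_num
    linarith
  · have := centralBinom_sq_mul_pi_le (m + 1)
    have hd : (m + 1).centralBinom = 2 * (2 * m + 1).choose m := by
      rw [Nat.centralBinom_eq_two_mul_choose, show 2 * (m + 1) = 2 * m + 1 + 1 by ring,
        Nat.choose_succ_succ, Nat.choose_symm_half]
      ring
    have he : ((m + 1).centralBinom : ℝ) / 4 ^ (m + 1) =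
        (2 * m + 1).choose m / 2 ^ (2 * m + 1) := by
      rw [hd, show (4 : ℝ) = 2 ^ 2 by norm_num, ← pow_mul, show 2 * (m + 1) = 2 * m + 1 + 1 by ring,
        pow_succ _ (2 * m + 1)]
      push_cast
      field_simp
    rw [he] at this
    rw [show (2 * m + 1) / 2 = m by omega]
    push_cast at *
    nlinarith [mul_nonneg (sq_nonneg ((2 * m + 1).choose m / 2 ^ (2 * m + 1) : ℝ)) Real.pi_pos.le]

theorem hasChainCover_pi_fin (t : ℕ) (k : Fin t → ℕ) :
    ∃ g : ℤ → ℤ, HasChainCover (∀ i, Fin (k i + 1)) g ∧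
      ∀ h : ℕ, (g h : ℝ) ≤ 2 * (∏ i, (k i + 1 : ℝ)) * centralMass (∑ i, k i) h := by
  induction t with
  | zero =>
    refine ⟨fun h => |h + 1| - |h - 1|, ⟨Unit, inferInstance, fun _ => 1,
      fun _ _ => finZeroElim, by simp, fun _ => monotone_const,
      fun x => ⟨(), 0, by simp, Subsingleton.elim _ _⟩, by simp⟩, fun h => ?_⟩
    rcases h with _ | h
    · simp [centralMass]
    · have h₁ : |((h + 1 : ℕ) : ℤ) + 1| - |((h + 1 : ℕ) : ℤ) - 1| = 2 := by
        rw [abs_of_nonneg (by omega), abs_of_nonneg (by omega)]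
        ring
      have h₂ : ((h + 1 : ℕ) : ℤ).sign = 1 := Int.sign_eq_one_of_pos (by omega)
      simp only [h₁, univ_eq_empty, prod_empty, sum_empty, centralMass, h₂]
      norm_num
  | succ t ih =>
    obtain ⟨g, hg, hbound⟩ := ih fun i => k i.succ
    refine ⟨_, (hg.fin_prod (k 0)).map (Fin.consOrderIso fun i => Fin (k i + 1))
      (OrderIso.monotone _) (OrderIso.surjective _), fun h => ?_⟩
    rw [← sum_range_min_odd hg.odd, Fin.prod_univ_succ, Fin.sum_univ_succ]
    set n : ℝ := ∏ i : Fin t, (k i.succ + 1 : ℝ)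
    set N := ∑ i : Fin t, k i.succ
    have hn0 : 0 ≤ n := prod_nonneg fun i _ => by positivity
    calc ((∑ j ∈ range (min h (k 0 + 1)), g (h + k 0 - 2 * j) : ℤ) : ℝ)
        ≤ ∑ j ∈ range (min h (k 0 + 1)), 2 * n * centralMass N (h + k 0 - 2 * j) := by
          push_cast
          refine sum_le_sum fun j hj => ?_
          have hj := mem_range.1 hj
          have := hbound (h + k 0 - 2 * j)
          rwa [Nat.cast_sub (by omega), Nat.cast_add, Nat.cast_mul] at this
      _ = 2 * n * ∑ j ∈ range (k 0 + 1), centralMass N (h + k 0 - 2 * j) := by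
          rw [← mul_sum, sum_range_min_odd (centralMass_neg N)]
      _ ≤ 2 * n * ((k 0 + 1) * centralMass (N + k 0) h) :=
          mul_le_mul_of_nonneg_left (sum_range_centralMass_le N (k 0) (by positivity))
            (by positivity)
      _ = 2 * ((k 0 + 1) * n) * centralMass (k 0 + N) h := by rw [add_comm N]; ring

/-- An antichain in a product of chains has at most the density of the middle layer of the Boolean
lattice of the same rank. -/
theorem card_antichain_pi_le {t : ℕ} {C : Fin t → Type*} [∀ i, LinearOrder (C i)]
    [∀ i, Fintype (C i)] {k : Fin t → ℕ} (hk : ∀ i, Fintype.card (C i) = k i + 1)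
    {A : Set (∀ i, C i)} (hA : IsAntichain (· ≤ ·) A) :
    (Nat.card A : ℝ) ≤ (∏ i, (k i + 1 : ℝ)) * centralMass (∑ i, k i) 1 := by
  obtain ⟨g, hg, hbound⟩ := hasChainCover_pi_fin t k
  let φ i := Fintype.orderIsoFinOfCardEq (C i) (hk i)
  have hcov : HasChainCover (∀ i, C i) g := hg.map (fun x i => φ i (x i))
    (fun x y hxy i => (φ i).monotone (hxy i))
    (fun y => ⟨fun i => (φ i).symm (y i), funext fun i => (φ i).apply_symm_apply (y i)⟩)
  have h₁ : 2 * (Nat.card A : ℝ) ≤ g 1 := by exact_mod_cast hcov.card_antichain_le hA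
  have h₂ := hbound 1
  push_cast at h₂
  linarith

theorem logb_two_succ_le (k : ℕ) : Real.logb 2 (k + 1 : ℝ) ≤ k := by
  rw [Real.logb_le_iff_le_rpow one_lt_two (by positivity), Real.rpow_natCast]
  exact_mod_cast Nat.succ_le_of_lt k.lt_two_pow_self

/-- Let `P` be a finite partially ordered set of cardinality `n ≥ 2` that is order-isomorphic
to the cartesian product (with componentwise order) of `t` chains `C 1, …, C t` (totally
ordered sets).  Then every antichain of `P` has cardinality at most `⌊b·n/√(log n)⌋`, where
`b = √(2/π)`.  Furthermore, if each of the `t` chains has the same cardinality `p`, then every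
antichain of `P` has cardinality at most `⌊b·p^t/√(t(p−1))⌋`. -/
theorem stmt_9 (P : Type*) [PartialOrder P] [Fintype P] (n : ℕ) (hn : 2 ≤ n)
    (hcard : Fintype.card P = n)
    (t : ℕ) (C : Fin t → Type*) [∀ i, LinearOrder (C i)] [∀ i, Fintype (C i)]
    (e : P ≃o ((i : Fin t) → C i))
    (A : Set P) (hA : IsAntichain (· ≤ ·) A) :
    Nat.card A ≤ ⌊Real.sqrt (2 / Real.pi) * n / Real.sqrt (Real.logb 2 n)⌋₊ ∧
    ∀ p : ℕ, (∀ i, Fintype.card (C i) = p) →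
      Nat.card A ≤
        ⌊Real.sqrt (2 / Real.pi) * (p : ℝ) ^ t / Real.sqrt (t * ((p : ℝ) - 1))⌋₊ := by
  have hpos : ∀ i, 0 < Fintype.card (C i) := by
    have : Nonempty P := Fintype.card_pos_iff.1 (by omega)
    exact fun i => Fintype.card_pos_iff.2 ⟨e (Classical.arbitrary P) i⟩
  choose k hk using fun i => Nat.exists_eq_add_of_lt (hpos i)
  simp only [zero_add] at hk
  have hprod : n = ∏ i, (k i + 1) := by
    rw [← hcard, Fintype.card_congr e.toEquiv, Fintype.card_pi]
    exact prod_congr rfl fun i _ => hk i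
  have hprodR : (n : ℝ) = ∏ i, (k i + 1 : ℝ) := by exact_mod_cast hprod
  have hlog : Real.logb 2 n ≤ (∑ i, k i : ℕ) := by
    rw [hprodR, Real.logb_prod _ _ fun i _ => by positivity, Nat.cast_sum]
    exact sum_le_sum fun i _ => logb_two_succ_le (k i)
  have hlogpos : 0 < Real.logb 2 n := Real.logb_pos one_lt_two (by exact_mod_cast hn)
  have hN : 0 < ∑ i, k i := by exact_mod_cast hlogpos.trans_le hlog
  have hbound : (Nat.card A : ℝ) ≤
      Real.sqrt (2 / Real.pi) * n / Real.sqrt (∑ i, k i : ℕ) := by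
    have hA' : IsAntichain (· ≤ ·) (Set.image e A) := by
      rw [← e.coe_toOrderEmbedding]
      exact hA.image_embedding e.toOrderEmbedding
    have h := card_antichain_pi_le hk hA'
    rw [Nat.card_image_of_injective e.injective, ← hprodR] at h
    refine h.trans ?_
    rw [mul_comm (Real.sqrt _), mul_div_assoc]
    exact mul_le_mul_of_nonneg_left (centralMass_one_le hN) (by positivity)
  refine ⟨Nat.le_floor (hbound.trans ?_), fun p hp => Nat.le_floor (hbound.trans_eq ?_)⟩
  · exact div_le_div_of_nonneg_left (by positivity) (Real.sqrt_pos.2 hlogpos)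
      (Real.sqrt_le_sqrt hlog)
  · have hkp : ∀ i, (k i : ℝ) = p - 1 := fun i => by
      rw [← hp i, hk i]
      simp
    simp only [hprodR, Nat.cast_sum, hkp, sub_add_cancel, prod_const, sum_const, card_univ,
      Fintype.card_fin, nsmul_eq_mul]
end

section
/- For every positive integer K, the central binomial coefficient satisfies binom(K, ⌊K/2⌋) ≤ √(2/π)·2^K/√K. -/
open Real.Wallis in
/-- The partial Wallis product in terms of central binomial coefficients. -/
theorem wallis_mul_centralBinom_sq (n : ℕ) :
    W n * ((n.centralBinom : ℝ) ^ 2 * (2 * n + 1)) = 16 ^ n := by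
  induction n with
  | zero => simp [W]
  | succ n ih =>
    have h : ((n : ℝ) + 1) * (n + 1).centralBinom = 2 * (2 * n + 1) * n.centralBinom := by
      exact_mod_cast Nat.succ_mul_centralBinom_succ n
    have h' : ((n + 1).centralBinom : ℝ) = 2 * (2 * n + 1) * n.centralBinom / (n + 1) := by
      rw [← h]
      field_simp
    rw [W_succ, h', pow_succ 16, ← ih]
    push_cast
    field_simp
    ring

/-- The squared form of the bound `centralBinom n ≤ 4 ^ n / √(π n)`. -/
theorem centralBinom_sq_mul_pi_le_s10 (n : ℕ) :
    (n.centralBinom : ℝ) ^ 2 * (Real.pi * n) ≤ 16 ^ n := by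
  rw [← wallis_mul_centralBinom_sq n, mul_left_comm (Real.Wallis.W n)]
  refine mul_le_mul_of_nonneg_left ?_ (sq_nonneg _)
  calc Real.pi * n ≤ ((2 * n + 1) / (2 * n + 2) * (Real.pi / 2)) * (2 * n + 1) := by
        rw [← sub_nonneg]
        have : ((2 * n + 1) / (2 * n + 2) * (Real.pi / 2)) * (2 * n + 1) - Real.pi * n
            = Real.pi / (4 * (n + 1)) := by
          field_simp
          ring
        rw [this]
        positivity
    _ ≤ Real.Wallis.W n * (2 * n + 1) :=
        mul_le_mul_of_nonneg_right (Real.Wallis.le_W n) (by positivity)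

theorem centralBinom_succ_eq_two_mul_choose (n : ℕ) :
    (n + 1).centralBinom = 2 * (2 * n + 1).choose n := by
  rw [Nat.centralBinom_eq_two_mul_choose, show 2 * (n + 1) = 2 * n + 1 + 1 by ring,
    Nat.choose_succ_succ, Nat.choose_symm_half]
  ring

theorem choose_half_sq_mul_pi_le (K : ℕ) :
    (K.choose (K / 2) : ℝ) ^ 2 * (Real.pi * K) ≤ 2 * (2 ^ K) ^ 2 := by
  obtain ⟨n, rfl | rfl⟩ := Nat.even_or_odd' K
  · have h := centralBinom_sq_mul_pi_le_s10 n
    rw [Nat.centralBinom_eq_two_mul_choose] at h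
    rw [Nat.mul_div_cancel_left n two_pos, ← pow_mul, mul_right_comm, pow_mul]
    norm_num
    linarith
  · have h := centralBinom_sq_mul_pi_le_s10 (n + 1)
    rw [centralBinom_succ_eq_two_mul_choose] at h
    rw [show (2 * n + 1) / 2 = n by omega, ← pow_mul,
      show (2 * n + 1) * 2 = 4 * n + 2 by ring, pow_add, pow_mul]
    rw [pow_succ 16] at h
    push_cast at h ⊢
    have : 0 ≤ ((2 * n + 1).choose n : ℝ) ^ 2 * Real.pi := by positivity
    norm_num
    linarith

/-- For every positive integer `K`, the central binomial coefficient satisfies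
`binom(K, ⌊K/2⌋) ≤ √(2/π)·2^K/√K`. -/
theorem stmt_10 (K : ℕ) (hK : 1 ≤ K) :
    (K.choose (K / 2) : ℝ) ≤ Real.sqrt (2 / Real.pi) * 2 ^ K / Real.sqrt K := by
  have hK' : (0 : ℝ) < K := by exact_mod_cast hK
  refine le_of_sq_le_sq ?_ (by positivity)
  rw [div_pow, mul_pow, Real.sq_sqrt (by positivity), Real.sq_sqrt hK'.le, le_div_iff₀ hK',
    div_mul_eq_mul_div, le_div_iff₀ Real.pi_pos]
  linarith [choose_half_sq_mul_pi_le K]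
end

section
/- Let G be a finite soluble group, H a subgroup of G of index n ≥ 2, F a field of characteristic p > 0, and V an H-module of finite dimension a over F. Let K := core_G(H), let r ≠ p be a prime, let P_r be a Sylow r-subgroup of G, and let χ₁ be the number of orbits of K ∩ P_r on the nonzero elements of V. Then for every submodule S of the induced module V↑G = F[G] ⊗_{F[H]} V, d_G(S) ≤ min{a, χ₁}·n_p. -/
/-- `dMod G S` is `d_G(S)`: the minimal number of elements required to generate the
(`G`-stable) submodule `S` as a `G`-module. -/
noncomputable def dMod (G : Type*) [Group G] {F W : Type*} [Field F] [AddCommGroup W]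
    [Module F W] [DistribMulAction G W] (S : Submodule F W) : ℕ :=
  sInf {m : ℕ | ∃ T : Finset W, T.card = m ∧ (T : Set W) ⊆ (S : Set W) ∧
    Submodule.span F {w : W | ∃ g : G, ∃ t ∈ T, w = g • t} = S}

/-- A nontrivial soluble group has a nontrivial abelian normal subgroup. -/
theorem exists_normal_isMulCommutative_ne_bot (G : Type*) [Group G] [Group.IsSolvable G]
    [Nontrivial G] : ∃ D : Subgroup G, D.Normal ∧ IsMulCommutative D ∧ D ≠ ⊥ := by
  classical
  have hex : ∃ m, derivedSeries G m = ⊥ := Group.IsSolvable.solvable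
  obtain ⟨m, hm⟩ : ∃ m, Nat.find hex = m + 1 := by
    refine Nat.exists_eq_succ_of_ne_zero fun h0 => ?_
    have := Nat.find_spec hex
    rw [h0, derivedSeries_zero] at this
    exact top_ne_bot this
  refine ⟨derivedSeries G m, inferInstance, ?_, Nat.find_min hex (by omega)⟩
  have hs := Nat.find_spec hex
  rw [hm, derivedSeries_succ, Subgroup.commutator_eq_bot_iff_le_centralizer] at hs
  exact Subgroup.le_centralizer_iff_isMulCommutative.mp hs

/-- A finite soluble group has a `p`-complement: a subgroup of order prime to `p` and index a
power of `p`. -/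
theorem exists_primeComplement.{u} (p : ℕ) [hp : Fact p.Prime] (c : ℕ) :
    ∀ (G : Type u) [Group G] [Finite G] [Group.IsSolvable G], Nat.card G = c →
      ∃ A : Subgroup G, ¬ p ∣ Nat.card A ∧ ∃ k, A.index = p ^ k := by
  induction c using Nat.strong_induction_on with
  | _ c ih =>
  intro G _ _ _ hc
  rcases subsingleton_or_nontrivial G with _ | _
  · refine ⟨⊤, ?_, 0, by simp⟩
    simpa using hp.out.ne_one
  have key : ∀ N : Subgroup G, N.Normal → N ≠ ⊥ → ∃ B : Subgroup G, N ≤ B ∧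
      ¬ p ∣ N.relIndex B ∧ ∃ k, B.index = p ^ k := by
    intro N _ hN
    have hlt : Nat.card (G ⧸ N) < c := by
      have h1 := N.card_mul_index
      have h2 : 1 < Nat.card N := (Subgroup.one_lt_card_iff_ne_bot N).mpr hN
      have h3 : 0 < N.index := Nat.pos_of_ne_zero Subgroup.FiniteIndex.index_ne_zero
      change N.index < c
      nlinarith
    obtain ⟨B, hB, k, hk⟩ := ih _ hlt (G ⧸ N) rfl
    have hle : N ≤ B.comap (QuotientGroup.mk' N) := by
      simpa using Subgroup.ker_le_comap (QuotientGroup.mk' N) B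
    have hidx : (B.comap (QuotientGroup.mk' N)).index = B.index :=
      B.index_comap_of_surjective (QuotientGroup.mk'_surjective N)
    refine ⟨_, hle, ?_, k, hidx.trans hk⟩
    have h1 := Subgroup.relIndex_mul_index hle
    have h2 : Nat.card B * B.index = N.index := B.card_mul_index
    rw [← h2, hidx] at h1
    rwa [Nat.eq_of_mul_eq_mul_right (hk ▸ pow_pos hp.out.pos k) h1]
  obtain ⟨D, hD, hDc, hD1⟩ := exists_normal_isMulCommutative_ne_bot G
  by_cases hpD : p ∣ Nat.card D
  · obtain ⟨P⟩ : Nonempty (Sylow p D) := inferInstance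
    have hPn : (P : Subgroup D).Normal := inferInstance
    have hPc : (P : Subgroup D).Characteristic := P.characteristic_of_normal hPn
    set N : Subgroup G := (P : Subgroup D).map D.subtype
    have hNn : N.Normal := ConjAct.normal_of_characteristic_of_normal
    have hNp : IsPGroup p N := P.2.map _
    have hN1 : N ≠ ⊥ := fun h => P.ne_bot_of_dvd_card hpD
      ((Subgroup.map_eq_bot_iff_of_injective _ D.subtype_injective).mp h)
    obtain ⟨B, hNB, hB, k, hk⟩ := key N hNn hN1
    obtain ⟨m, hm⟩ := IsPGroup.iff_card.mp hNp
    have hcard : Nat.card (N.subgroupOf B) = p ^ m := by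
      rw [← hm]; exact Nat.card_congr (Subgroup.subgroupOfEquivOfLe hNB).toEquiv
    obtain ⟨A, hA⟩ := Subgroup.exists_left_complement'_of_coprime (N := N.subgroupOf B) (by
      rw [hcard]
      exact Nat.Coprime.pow_left _ ((Nat.Prime.coprime_iff_not_dvd hp.out).mpr hB))
    refine ⟨A.map B.subtype, ?_, m + k, ?_⟩
    · rw [Subgroup.card_subtype, ← hA.index_eq_card]
      exact hB
    · rw [Subgroup.index_map_subtype, hA.symm.index_eq_card, hcard, hk, pow_add]
  · obtain ⟨B, hNB, hB, k, hk⟩ := key D hD hD1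
    refine ⟨B, ?_, k, hk⟩
    have := Subgroup.card_mul_index (D.subgroupOf B)
    rw [← this, Nat.card_congr (Subgroup.subgroupOfEquivOfLe hNB).toEquiv]
    exact hp.out.not_dvd_mul hpD hB

/-- The intersection of a Sylow subgroup with a normal subgroup `K` is a Sylow subgroup of `K`. -/
theorem Sylow.exists_coe_eq_subgroupOf {G : Type*} [Group G] [Finite G] {r : ℕ} [Fact r.Prime]
    (K : Subgroup G) [K.Normal] (P : Sylow r G) :
    ∃ Q : Sylow r K, (Q : Subgroup K) = (P : Subgroup G).subgroupOf K := by
  obtain ⟨Q₀⟩ : Nonempty (Sylow r K) := inferInstance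
  obtain ⟨P₀, hP₀⟩ := Q₀.exists_comap_subtype_eq
  obtain ⟨g, hg⟩ := MulAction.exists_smul_eq G P₀ P
  refine ⟨(MulAut.conjNormal g : MulAut K) • Q₀, ?_⟩
  ext x
  rw [← hg, Sylow.pointwise_smul_def, ← hP₀, Subgroup.mem_subgroupOf, Sylow.coe_subgroup_smul,
    Subgroup.mem_pointwise_smul_iff_inv_smul_mem, Subgroup.mem_pointwise_smul_iff_inv_smul_mem,
    Subgroup.mem_comap, ← map_inv, ← map_inv]
  rw [MulAut.smul_def, MulAut.smul_def]
  simp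

/-- If the index of `A` is prime to `r`, then for every normal subgroup `K` and Sylow `r`-subgroup
`P`, each conjugate of `K ⊓ P` can be moved into `A` by an element of `K`. -/
theorem exists_conj_normal_inf_sylow_mem {G : Type*} [Group G] [Finite G] {r : ℕ} [Fact r.Prime]
    (K : Subgroup G) [K.Normal] (P : Sylow r G) (A : Subgroup G) (hA : ¬ r ∣ A.index) (x : G) :
    ∃ k ∈ K, ∀ h ∈ K ⊓ (P : Subgroup G), (x * k) * h * (x * k)⁻¹ ∈ A := by
  obtain ⟨Q₀⟩ : Nonempty (Sylow r A) := inferInstance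
  have hQ : ¬ r ∣ ((Q₀ : Subgroup A).map A.subtype).index := by
    rw [Subgroup.index_map_subtype]
    exact (Fact.out : r.Prime).not_dvd_mul Q₀.not_dvd_index hA
  obtain ⟨R₁, hR₁⟩ := Sylow.exists_coe_eq_subgroupOf K (x • P)
  obtain ⟨R₂, hR₂⟩ := Sylow.exists_coe_eq_subgroupOf K ((Q₀.2.map A.subtype).toSylow hQ)
  obtain ⟨k, hk⟩ := MulAction.exists_smul_eq K R₁ R₂
  refine ⟨x⁻¹ * k * x, ‹K.Normal›.conj_mem' _ k.2 x, fun h hh => ?_⟩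
  have hmem : (⟨x * h * x⁻¹, ‹K.Normal›.conj_mem _ hh.1 x⟩ : K) ∈ (R₁ : Subgroup K) := by
    rw [hR₁, Subgroup.mem_subgroupOf, Sylow.coe_subgroup_smul,
      Subgroup.mem_pointwise_smul_iff_inv_smul_mem, ← map_inv, MulAut.smul_def]
    have hconj : MulAut.conj x⁻¹ (x * h * x⁻¹) = h := by simp [mul_assoc]
    exact hconj.symm ▸ hh.2
  have h2 := Subgroup.smul_mem_pointwise_smul _ (MulAut.conj k) _ hmem
  rw [← Sylow.coe_subgroup_smul, hk, hR₂, Subgroup.mem_subgroupOf, IsPGroup.toSylow_coe] at h2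
  obtain ⟨y, -, hy⟩ := h2
  have : x * (x⁻¹ * k * x) * h * (x * (x⁻¹ * k * x))⁻¹ = y := by
    simp only [Subgroup.coe_subtype] at hy
    rw [hy, MulAut.smul_def]
    simp [mul_assoc]
  rw [this]
  exact y.2

/-- A `p`-complement has at most `n_p` orbits on the `n` cosets of a subgroup of index `n`. -/
theorem card_orbits_quotient_le {G : Type*} [Group G] [Finite G] {p : ℕ} [hp : Fact p.Prime]
    (A H : Subgroup G) {k : ℕ} (hk : A.index = p ^ k) :
    Nat.card (MulAction.orbitRel.Quotient A (G ⧸ H)) ≤ p ^ H.index.factorization p := by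
  classical
  have hn0 : H.index ≠ 0 := Subgroup.FiniteIndex.index_ne_zero
  set m := H.index / p ^ H.index.factorization p
  have hmul : p ^ H.index.factorization p * m = H.index := Nat.ordProj_mul_ordCompl_eq_self _ _
  have hmpos : 0 < m := Nat.ordCompl_pos p hn0
  have hcop : Nat.Coprime m (p ^ k) :=
    (Nat.coprime_ordCompl hp.out hn0).symm.pow_right k
  have horb : ∀ q : G ⧸ H, m ≤ Nat.card (MulAction.orbit A q) := by
    intro q
    have hle : (MulAction.stabilizer A q).map A.subtype ≤ MulAction.stabilizer G q := by
      rintro _ ⟨x, hx, rfl⟩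
      exact hx
    have h1 := Subgroup.index_dvd_of_le hle
    rw [MulAction.index_stabilizer_of_transitive, Subgroup.index_map_subtype, hk,
      MulAction.index_stabilizer] at h1
    have h2 : m ∣ (MulAction.orbit A q).ncard * p ^ k :=
      (Dvd.intro_left _ hmul : m ∣ H.index).trans h1
    refine Nat.le_of_dvd ?_ (hcop.dvd_of_dvd_mul_right h2)
    exact Nat.card_pos_iff.mpr ⟨⟨⟨q, MulAction.mem_orbit_self q⟩⟩, inferInstance⟩
  have := Fintype.ofFinite (MulAction.orbitRel.Quotient A (G ⧸ H))
  have hsum : H.index = ∑ ω : MulAction.orbitRel.Quotient A (G ⧸ H),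
      Nat.card (MulAction.orbit A ω.out) := by
    rw [← Nat.card_sigma]
    exact Nat.card_congr (MulAction.selfEquivSigmaOrbits A (G ⧸ H))
  have hge : Nat.card (MulAction.orbitRel.Quotient A (G ⧸ H)) * m ≤ H.index := by
    rw [hsum, Nat.card_eq_fintype_card, ← smul_eq_mul, ← Finset.card_univ, ← Finset.sum_const]
    exact Finset.sum_le_sum fun ω _ => horb ω.out
  rw [← hmul] at hge
  exact Nat.le_of_mul_le_mul_right hge hmpos

/-- **Maschke's theorem**: a stable subspace is the image of an equivariant projection when the
group order is invertible in `F`. -/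
theorem exists_equivariant_projection {A F W : Type*} [Group A] [Finite A] [Field F]
    [AddCommGroup W] [Module F W] [DistribMulAction A W] [SMulCommClass A F W]
    (hcard : (Nat.card A : F) ≠ 0) (S : Submodule F W) (hS : ∀ a : A, ∀ w ∈ S, a • w ∈ S) :
    ∃ π : W →ₗ[F] W, (∀ (a : A) w, π (a • w) = a • π w) ∧ (∀ w, π w ∈ S) ∧
      ∀ w ∈ S, π w = w := by
  have := Fintype.ofFinite A
  obtain ⟨f, hf⟩ := LinearMap.exists_leftInverse_of_injective S.subtype S.ker_subtype
  let ρ : A → W →ₗ[F] W := fun a => DistribSMul.toLinearMap F W a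
  let e : W →ₗ[F] W := S.subtype ∘ₗ f
  have he : ∀ w ∈ S, e w = w := fun w hw =>
    congrArg Subtype.val (LinearMap.congr_fun hf (⟨w, hw⟩ : S))
  have heS : ∀ w, e w ∈ S := fun w => (f w).2
  refine ⟨(Nat.card A : F)⁻¹ • ∑ a, ρ a ∘ₗ e ∘ₗ ρ a⁻¹, fun b w => ?_, fun w => ?_, fun w hw => ?_⟩
  · simp only [LinearMap.smul_apply, LinearMap.sum_apply, LinearMap.comp_apply, ρ,
      DistribSMul.toLinearMap_apply]
    rw [smul_comm b]
    congr 1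
    rw [Finset.smul_sum]
    refine (Fintype.sum_equiv (Equiv.mulLeft b) _ _ fun a => ?_).symm
    simp [mul_smul]
  · simp only [LinearMap.smul_apply, LinearMap.sum_apply, LinearMap.comp_apply, ρ,
      DistribSMul.toLinearMap_apply]
    exact S.smul_mem _ (S.sum_mem fun a _ => hS a _ (heS _))
  · have : ∀ a : A, (ρ a ∘ₗ e ∘ₗ ρ a⁻¹) w = w := fun a => by
      simp only [LinearMap.comp_apply, ρ, DistribSMul.toLinearMap_apply]
      rw [he _ (hS _ _ hw), smul_inv_smul]
    rw [LinearMap.smul_apply, LinearMap.sum_apply, Finset.sum_congr rfl fun a _ => this a,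
      Finset.sum_const, Finset.card_univ, ← Nat.card_eq_fintype_card, ← Nat.cast_smul_eq_nsmul F,
      inv_smul_smul₀ hcard]

/-- If `T` generates `V` under `R`, and every double coset of `A` and `H` has a representative
conjugating `R` into `A`, then the translates of `T` by one representative of each double coset
generate `W` under `A`. -/
theorem exists_generators_of_translates {G F W : Type*} [Group G] [Finite G] [Field F]
    [AddCommGroup W] [Module F W] [DistribMulAction G W] [SMulCommClass G F W]
    (A H R : Subgroup G) (V : Submodule F W) (hV : ∀ g ∈ H, ∀ v ∈ V, g • v ∈ V)
    (htop : ⨆ g : G, V.map (DistribSMul.toLinearMap F W g) = ⊤)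
    (hR : ∀ x : G, ∃ k ∈ H, ∀ h ∈ R, (x * k) * h * (x * k)⁻¹ ∈ A)
    (T : Finset W) (hT : V ≤ Submodule.span F {w | ∃ g ∈ R, ∃ t ∈ T, w = g • t}) :
    ∃ U : Finset W, U.card ≤ T.card * Nat.card (MulAction.orbitRel.Quotient A (G ⧸ H)) ∧
      Submodule.span F {w : W | ∃ g : A, ∃ u ∈ U, w = g • u} = ⊤ := by
  classical
  let Ω := MulAction.orbitRel.Quotient A (G ⧸ H)
  have : Fintype Ω := Fintype.ofFinite _
  choose k hkH hk using hR
  let x : Ω → G := fun ω => ω.out.out * k ω.out.out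
  refine ⟨(T ×ˢ (Finset.univ : Finset Ω)).image fun y => x y.2 • y.1, ?_, ?_⟩
  · refine Finset.card_image_le.trans ?_
    rw [Finset.card_product, Finset.card_univ, Nat.card_eq_fintype_card]
  · set M := Submodule.span F {w : W | ∃ g : A, ∃ u ∈ (T ×ˢ (Finset.univ : Finset Ω)).image
      (fun y => x y.2 • y.1), w = g • u}
    rw [eq_top_iff, ← htop]
    refine iSup_le fun g => ?_
    let ω : Ω := Quotient.mk'' (g : G ⧸ H)
    obtain ⟨b, hb⟩ : (g : G ⧸ H) ∈ MulAction.orbit A ω.out :=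
      MulAction.orbitRel_apply.mp (Quotient.exact (Quotient.out_eq ω).symm)
    have hg : ((b : G) * x ω)⁻¹ * g ∈ H := by
      have h1 : (((b : G) * ω.out.out : G) : G ⧸ H) = (g : G ⧸ H) := by
        rw [← hb]
        exact MulAction.Quotient.mk_smul_out (H := H) (b : G) ω.out
      have h2 := H.mul_mem (H.inv_mem (hkH ω.out.out)) (QuotientGroup.eq.mp h1)
      simpa [x, mul_assoc] using h2
    have hbx : ∀ v ∈ V, ((b : G) * x ω) • v ∈ M := by
      suffices V ≤ M.comap (DistribSMul.toLinearMap F W ((b : G) * x ω)) from this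
      refine hT.trans (Submodule.span_le.mpr ?_)
      rintro _ ⟨h, hh, t, ht, rfl⟩
      refine Submodule.subset_span ⟨b * ⟨_, hk ω.out.out h hh⟩, x ω • t,
        Finset.mem_image.mpr ⟨(t, ω), by simp [ht], rfl⟩, ?_⟩
      simp only [DistribSMul.toLinearMap_apply, Subgroup.smul_def, Subgroup.coe_mul, ← mul_smul, x]
      congr 1
      group
    rintro _ ⟨v, hv, rfl⟩
    have := hbx _ (hV _ hg v hv)
    rwa [← mul_smul, mul_inv_cancel_left] at this

/-- In the setting of an induced module, if `T` generates `V` under `core_G(H) ⊓ P`, then every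
submodule is generated by at most `|T| · n_p` elements. -/
theorem dMod_le_card_mul {G F W : Type*} [Group G] [Finite G] [Group.IsSolvable G] [Field F]
    {p : ℕ} [hp : Fact p.Prime] [CharP F p]
    [AddCommGroup W] [Module F W] [DistribMulAction G W] [SMulCommClass G F W]
    (H : Subgroup G) (V : Submodule F W) (hV : ∀ g ∈ H, ∀ v ∈ V, g • v ∈ V)
    (htop : ⨆ g : G, V.map (DistribSMul.toLinearMap F W g) = ⊤)
    {r : ℕ} (hr : r.Prime) (hrp : r ≠ p) (P : Sylow r G)
    (T : Finset W)
    (hT : V ≤ Submodule.span F {w | ∃ g ∈ H.normalCore ⊓ (P : Subgroup G), ∃ t ∈ T, w = g • t})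
    (S : Submodule F W) (hS : ∀ g : G, ∀ w ∈ S, g • w ∈ S) :
    dMod G S ≤ T.card * p ^ H.index.factorization p := by
  classical
  have : Fact r.Prime := ⟨hr⟩
  obtain ⟨A, hA, k, hk⟩ := exists_primeComplement p _ G rfl
  have hrA : ¬ r ∣ A.index := fun h =>
    hrp ((Nat.prime_dvd_prime_iff_eq hr hp.out).mp (hr.dvd_of_dvd_pow (hk ▸ h)))
  obtain ⟨U, hUcard, hU⟩ := exists_generators_of_translates A H (H.normalCore ⊓ (P : Subgroup G)) V
    hV htop (fun x => by
      obtain ⟨y, hy, h⟩ := exists_conj_normal_inf_sylow_mem H.normalCore P A hrA x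
      exact ⟨y, H.normalCore_le hy, h⟩) T hT
  obtain ⟨π, hπA, hπS, hπ⟩ := exists_equivariant_projection (A := A)
    (by rwa [Ne, CharP.cast_eq_zero_iff F p]) S fun a w hw => hS a w hw
  have hcard : (U.image π).card ≤ T.card * p ^ H.index.factorization p :=
    Finset.card_image_le.trans <| hUcard.trans <|
      Nat.mul_le_mul_left _ (card_orbits_quotient_le A H hk)
  refine le_trans (Nat.sInf_le ?_) hcard
  refine ⟨U.image π, rfl, ?_, le_antisymm ?_ ?_⟩
  · intro w hw
    obtain ⟨u, -, rfl⟩ := Finset.mem_image.mp (Finset.mem_coe.mp hw)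
    exact hπS u
  · refine Submodule.span_le.mpr ?_
    rintro _ ⟨g, w, hw, rfl⟩
    obtain ⟨u, -, rfl⟩ := Finset.mem_image.mp hw
    exact hS g _ (hπS u)
  · intro s hs
    have h1 : (⊤ : Submodule F W) ≤ (Submodule.span F
        {w : W | ∃ g : G, ∃ t ∈ U.image π, w = g • t}).comap π := by
      rw [← hU]
      refine Submodule.span_le.mpr ?_
      rintro _ ⟨a, u, hu, rfl⟩
      refine Submodule.subset_span ⟨a, π u, Finset.mem_image_of_mem π hu, hπA a u⟩
    have h2 := Submodule.mem_comap.mp (h1 (Submodule.mem_top (x := s)))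
    rwa [hπ s hs] at h2

/-- Let `G` be a finite soluble group, `H ≤ G` of index `n ≥ 2`, `F` a field of characteristic
`p > 0`, and `V` an `H`-module of finite dimension `a` over `F`.  The induced module `V↑G` is
presented internally: `W` is a `G`-module containing an `H`-stable subspace `V` of dimension
`a` such that `W` is the direct sum of the translates `g • V` over the cosets `g H ∈ G ⧸ H`.
Let `K = core_G H`, let `r ≠ p` be a prime, `P_r` a Sylow `r`-subgroup of `G`, and `χ₁` the
number of orbits of `K ∩ P_r` on the nonzero elements of `V`.  Then for every (`G`-stable)
submodule `S` of `W`, `d_G(S) ≤ min{a,χ₁}·n_p`; the bound with `min{a,χ₁}` replaced by `a`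
holds without finiteness assumptions on the set of orbits. -/
theorem stmt_12 (G : Type*) [Group G] [Fintype G] (hsol : IsSolvable G)
    (H : Subgroup G) (n : ℕ) (hn : 2 ≤ n) (hidx : H.index = n)
    (F W : Type*) [Field F] (p : ℕ) [Fact p.Prime] (hchar : CharP F p)
    [AddCommGroup W] [Module F W] [DistribMulAction G W] [SMulCommClass G F W]
    (V : Submodule F W) [FiniteDimensional F V] (a : ℕ) (ha : Module.finrank F V = a)
    (hVstable : ∀ g ∈ H, ∀ v ∈ V, g • v ∈ V)
    (hinduced : ∃ φ : G ⧸ H → Submodule F W,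
      (∀ g : G, φ (g : G ⧸ H) = V.map (DistribMulAction.toLinearMap F W g)) ∧
        iSupIndep φ ∧ iSup φ = ⊤)
    (r : ℕ) (hr : r.Prime) (hrp : r ≠ p) (Pr : Sylow r G)
    (orbs : Set (Set W))
    (horbs : orbs = {s : Set W | ∃ v ∈ (V : Set W), v ≠ 0 ∧
      s = {w : W | ∃ g ∈ H.normalCore ⊓ (Pr : Subgroup G), g • v = w}})
    (χ₁ : ℕ) (hχ₁ : χ₁ = Nat.card orbs)
    (S : Submodule F W) (hSstable : ∀ g : G, ∀ w ∈ S, g • w ∈ S) :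
    (orbs.Finite → dMod G S ≤ min a χ₁ * p ^ n.factorization p) ∧
      dMod G S ≤ a * p ^ n.factorization p := by
  classical
  have : Group.IsSolvable G := hsol
  obtain ⟨φ, hφ, -, hφtop⟩ := hinduced
  have htop : ⨆ g : G, V.map (DistribSMul.toLinearMap F W g) = ⊤ := by
    rw [eq_top_iff, ← hφtop]
    refine iSup_le fun q => ?_
    obtain ⟨g, rfl⟩ := QuotientGroup.mk_surjective q
    rw [hφ]
    exact le_iSup (fun g : G => V.map (DistribSMul.toLinearMap F W g)) g
  have key := fun T hT => hidx ▸ dMod_le_card_mul (p := p) H V hVstable htop hr hrp Pr T hT S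
    hSstable
  have hdim : dMod G S ≤ a * p ^ n.factorization p := by
    let b := Module.finBasis F V
    refine (key (Finset.univ.image fun i => (b i : W)) ?_).trans
      (Nat.mul_le_mul_right _ (Finset.card_image_le.trans (by simp [ha])))
    have hspan : V = Submodule.span F (Set.range fun i => (b i : W)) := by
      have h := congrArg (Submodule.map V.subtype) b.span_eq
      rw [Submodule.map_span, ← Set.range_comp, Submodule.map_top, Submodule.range_subtype] at h
      exact h.symm
    conv_lhs => rw [hspan]
    refine Submodule.span_mono ?_
    rintro _ ⟨i, rfl⟩
    exact ⟨1, Subgroup.one_mem _, b i, by simp, by simp⟩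
  refine ⟨fun hfin => ?_, hdim⟩
  rcases min_choice a χ₁ with h | h
  · rwa [h]
  · rw [h]
    have hrep : ∀ s : orbs, ∃ v : W, (s : Set W) =
        {w : W | ∃ g ∈ H.normalCore ⊓ (Pr : Subgroup G), g • v = w} := by
      rintro ⟨s, hs⟩
      rw [horbs] at hs
      obtain ⟨v, -, -, hv⟩ := hs
      exact ⟨v, hv⟩
    choose v hv using hrep
    have : Fintype orbs := hfin.fintype
    refine (key (Finset.univ.image v) fun w hw => ?_).trans
      (Nat.mul_le_mul_right _ (Finset.card_image_le.trans (by simp [hχ₁])))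
    rcases eq_or_ne w 0 with rfl | hw0
    · exact Submodule.zero_mem _
    · let s : orbs := ⟨{u : W | ∃ g ∈ H.normalCore ⊓ (Pr : Subgroup G), g • w = u},
        horbs ▸ ⟨w, hw, hw0, rfl⟩⟩
      have hws : w ∈ (s : Set W) := ⟨1, Subgroup.one_mem _, one_smul G w⟩
      rw [hv s] at hws
      obtain ⟨g, hg, hgw⟩ := hws
      exact Submodule.subset_span ⟨g, hg, v s, by simp, hgw.symm⟩
end

section
/- Let G be a finite group, H a subgroup of G of index n ≥ 2, F a field of characteristic p > 0, and V an H-module of finite dimension over F. Let K := core_G(H), and let χ be the number of orbits of K on the nonzero elements of V (assumed finite). If K is soluble and n_p > 1, then for every submodule S of the induced module V↑G = F[G] ⊗_{F[H]} V, d_G(S) ≤ χ·⌊b·n/√(log_p n_p)⌋, where b := √(2/π). -/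
theorem two_pow_mul_card_antichain_le {k p : ℕ} (hp : 2 ≤ p) (A : Finset (Fin k → Fin p))
    (hA : IsAntichain (· ≤ ·) (A : Set (Fin k → Fin p))) :
    2 ^ k * A.card ≤ p ^ k * k.choose (k / 2) := by
  classical
  obtain ⟨p, rfl⟩ := Nat.exists_eq_add_of_le' hp
  have hne : ∀ c : Fin (p + 2), c + 1 ≠ c := fun c h => by simp at h
  let q : (Fin k → Fin (p + 2)) → Finset (Fin k) → (Fin k → Fin (p + 2)) := fun c B i =>
    if i ∈ B then max (c i) (c i + 1) else min (c i) (c i + 1)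
  have hlt : ∀ c : Fin (p + 2), min c (c + 1) < max c (c + 1) := fun c =>
    min_lt_max.2 (hne c).symm
  have hmono : ∀ c B B', B ⊆ B' → q c B ≤ q c B' := by
    intro c B B' h i
    simp only [q]
    split_ifs with h1 h2
    · exact le_rfl
    · exact absurd (h h1) h2
    · exact (hlt _).le
    · exact le_rfl
  have hinj : ∀ c B B', q c B = q c B' → B = B' := by
    intro c B B' h
    ext i
    have := congrFun h i
    simp only [q] at this
    have h3 := hlt (c i)
    split_ifs at this with h1 h2 h2
    · simp [h1, h2]
    · exact absurd this h3.ne'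
    · exact absurd this h3.ne
    · simp [h1, h2]
  let X : Finset ((Fin k → Fin (p + 2)) × Finset (Fin k)) :=
    Finset.univ.filter fun x => q x.1 x.2 ∈ A
  have hX : X.card ≤ (p + 2) ^ k * k.choose (k / 2) := by
    have hfib : ∀ c : Fin k → Fin (p + 2), (X.filter fun x => x.1 = c).card ≤ k.choose (k / 2) := by
      intro c
      have h1 : (X.filter fun x => x.1 = c).card =
          (Finset.univ.filter fun B : Finset (Fin k) => q c B ∈ A).card := by
        refine Finset.card_bij (fun x _ => x.2) ?_ ?_ ?_
        · rintro ⟨c', B⟩ h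
          simp only [X, Finset.mem_filter, Finset.mem_univ, true_and] at h ⊢
          exact h.2 ▸ h.1
        · rintro ⟨c', B⟩ h ⟨c'', B'⟩ h' hh
          simp only [X, Finset.mem_filter] at h h' hh
          rw [h.2, h'.2, hh]
        · intro B hB
          exact ⟨(c, B), by simpa [X] using hB, rfl⟩
      rw [h1]
      have := IsAntichain.sperner
        (𝒜 := Finset.univ.filter fun B : Finset (Fin k) => q c B ∈ A) (by
          intro B hB B' hB' hne hsub
          simp only [Finset.coe_filter, Finset.mem_univ, true_and, Set.mem_ofPred_eq] at hB hB'
          exact hA hB hB' (fun h => hne (hinj c _ _ h)) (hmono c _ _ hsub))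
      simpa using this
    calc X.card = ∑ c : Fin k → Fin (p + 2), (X.filter fun x => x.1 = c).card :=
          Finset.card_eq_sum_card_fiberwise (fun _ _ => Finset.mem_coe.2 (Finset.mem_univ _))
      _ ≤ ∑ _c : Fin k → Fin (p + 2), k.choose (k / 2) := Finset.sum_le_sum fun c _ => hfib c
      _ = (p + 2) ^ k * k.choose (k / 2) := by simp
  refine le_trans ?_ hX
  let c : (Fin k → Fin (p + 2)) → Finset (Fin k) → (Fin k → Fin (p + 2)) := fun a D i =>
    if i ∈ D then a i else a i - 1
  let B : (Fin k → Fin (p + 2)) → Finset (Fin k) → Finset (Fin k) := fun a D =>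
    Finset.univ.filter fun i => a i = max (c a D i) (c a D i + 1)
  have hq : ∀ a D, q (c a D) (B a D) = a := by
    intro a D
    funext i
    by_cases hi : a i = max (c a D i) (c a D i + 1)
    · have : i ∈ B a D := by simpa [B] using hi
      simp only [q, this, if_true]
      exact hi.symm
    · have : i ∉ B a D := by simpa [B] using hi
      simp only [q, this, if_false]
      have h2 : a i = c a D i ∨ a i = c a D i + 1 := by
        simp only [c]
        split_ifs <;> simp
      rcases le_total (c a D i) (c a D i + 1) with h | h
      · rw [max_eq_right h] at hi
        rw [min_eq_left h]
        tauto
      · rw [max_eq_left h] at hi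
        rw [min_eq_right h]
        tauto
  have hcard : ((Finset.univ : Finset (Finset (Fin k))) ×ˢ A).card = 2 ^ k * A.card := by
    simp [Finset.card_product]
  rw [← hcard]
  refine Finset.card_le_card_of_injOn (fun x => (c x.2 x.1, B x.2 x.1)) ?_ ?_
  · rintro ⟨D, a⟩ h
    simp only [Finset.coe_product, Set.mem_prod, Finset.mem_coe] at h
    simp [X, hq, h.2]
  · rintro ⟨D, a⟩ - ⟨D', a'⟩ - h
    simp only [Prod.mk.injEq] at h
    have ha : a = a' := by rw [← hq a D, ← hq a' D', h.1, h.2]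
    subst ha
    have hsub : ∀ x : Fin (p + 2), x - 1 ≠ x := fun x h => hne x (by
      conv_lhs => rw [← h]
      simp)
    have : D = D' := by
      ext i
      have := congrFun h.1 i
      simp only [c] at this
      split_ifs at this with h1 h2 h2
      · simp [h1, h2]
      · exact absurd this.symm (hsub _)
      · exact absurd this (hsub _)
      · simp [h1, h2]
    rw [this]

theorem centralBinom_sq_mul_le (n : ℕ) :
    ((n.centralBinom : ℝ)) ^ 2 * (Real.pi * n) ≤ 16 ^ n := by
  have h1 := Real.Wallis.le_W n
  rw [Real.Wallis.W_eq_factorial_ratio] at h1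
  have h2 : (n.centralBinom : ℝ) * ((n.factorial : ℝ) * n.factorial) = ((2 * n).factorial : ℝ) := by
    have := Nat.choose_mul_factorial_mul_factorial (n := 2 * n) (k := n) (by omega)
    rw [show 2 * n - n = n by omega] at this
    rw [Nat.centralBinom]
    rw [← this]; push_cast; ring
  have hf : (0 : ℝ) < n.factorial := by exact_mod_cast Nat.factorial_pos n
  have hc : (0 : ℝ) < n.centralBinom := by exact_mod_cast Nat.centralBinom_pos n
  rw [← h2, show (2 : ℝ) ^ (4 * n) = 16 ^ n by rw [pow_mul]; norm_num] at h1
  have h3 : (16 : ℝ) ^ n * n.factorial ^ 4 /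
      ((n.centralBinom * ((n.factorial : ℝ) * n.factorial)) ^ 2 * (2 * n + 1)) =
      16 ^ n / ((n.centralBinom : ℝ) ^ 2 * (2 * n + 1)) := by
    field_simp
  rw [h3, le_div_iff₀ (by positivity)] at h1
  refine le_trans ?_ h1
  have h4 : (n : ℝ) ≤ (2 * n + 1) / (2 * n + 2) * (1 / 2) * (2 * n + 1) := by
    rw [div_mul_eq_mul_div, div_mul_eq_mul_div, le_div_iff₀ (by positivity)]
    nlinarith
  calc (n.centralBinom : ℝ) ^ 2 * (Real.pi * n)
      ≤ (n.centralBinom : ℝ) ^ 2 * (Real.pi * ((2 * n + 1) / (2 * n + 2) * (1 / 2) * (2 * n + 1))) := by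
        gcongr
    _ = _ := by ring

theorem choose_half_sq_mul_le (k : ℕ) :
    ((k.choose (k / 2) : ℝ)) ^ 2 * (Real.pi * k) ≤ 2 * 4 ^ k := by
  obtain ⟨m, rfl | rfl⟩ := Nat.even_or_odd' k
  · have := centralBinom_sq_mul_le m
    rw [show 2 * m / 2 = m by omega, ← Nat.centralBinom_eq_two_mul_choose]
    rw [pow_mul]; push_cast; norm_num
    linarith
  · have := centralBinom_sq_mul_le (m + 1)
    rw [show (2 * m + 1) / 2 = m by omega]
    have h : (m + 1).centralBinom = 2 * (2 * m + 1).choose m := by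
      have h1 := Nat.choose_succ_succ (2 * m + 1) m
      have h2 := Nat.choose_symm_half m
      rw [Nat.centralBinom, show 2 * (m + 1) = 2 * m + 1 + 1 by ring, h1, Nat.succ_eq_add_one, h2]
      ring
    rw [h] at this
    push_cast at this ⊢
    have h5 : (4 : ℝ) ^ (2 * m + 1) = 4 * 16 ^ m := by rw [pow_succ, pow_mul]; norm_num; ring
    rw [h5]
    rw [pow_succ (16 : ℝ)] at this
    have := mul_nonneg (sq_nonneg ((2 * m + 1).choose m : ℝ)) Real.pi_pos.le
    nlinarith

theorem choose_half_mul_sqrt_le (k : ℕ) :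
    (k.choose (k / 2) : ℝ) * √k ≤ √(2 / Real.pi) * 2 ^ k := by
  have h := choose_half_sq_mul_le k
  refine abs_le_of_sq_le_sq' ?_ (by positivity) |>.2
  rw [mul_pow, mul_pow, Real.sq_sqrt (by positivity), Real.sq_sqrt (by positivity), div_mul_eq_mul_div,
    le_div_iff₀ Real.pi_pos, ← pow_mul, mul_comm k 2, pow_mul]
  norm_num
  linarith

/-- The width of a product of `k` chains of length `p` is at most `√(2/π) p^k / √m` for `m ≤ k`. -/
theorem card_antichain_mul_sqrt_le {k p m : ℕ} (hp : 2 ≤ p) (hm : m ≤ k)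
    (A : Finset (Fin k → Fin p))
    (hA : IsAntichain (· ≤ ·) (A : Set (Fin k → Fin p))) :
    (A.card : ℝ) * √m ≤ √(2 / Real.pi) * p ^ k := by
  have h1 : (2 ^ k * A.card : ℝ) ≤ p ^ k * k.choose (k / 2) := by
    exact_mod_cast two_pow_mul_card_antichain_le hp A hA
  have h2 := choose_half_mul_sqrt_le k
  have h3 : √(m : ℝ) ≤ √k := Real.sqrt_le_sqrt (by exact_mod_cast hm)
  have h4 : (0 : ℝ) < 2 ^ k := by positivity
  refine le_of_mul_le_mul_left ?_ h4
  calc (2 : ℝ) ^ k * (A.card * √m) = (2 ^ k * A.card) * √m := by ring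
    _ ≤ (p ^ k * k.choose (k / 2)) * √k := by gcongr
    _ = p ^ k * (k.choose (k / 2) * √k) := by ring
    _ ≤ p ^ k * (√(2 / Real.pi) * 2 ^ k) := by gcongr
    _ = _ := by ring

theorem exists_transversal_of_card_eq_prime_mul {P : Type*} [Group P] [Finite P] {p : ℕ}
    [hp : Fact p.Prime] (hP : IsPGroup p P) {N Q : Subgroup P} (hNQ : N ≤ Q)
    (hcard : Nat.card Q = Nat.card N * p) :
    ∃ t ∈ Q, (∀ n ∈ N, ∀ c : ℕ, t ^ c * n * (t ^ c)⁻¹ ∈ N) ∧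
      (∀ g ∈ Q, ∃ c : Fin p, ∃ n ∈ N, g = t ^ (c : ℕ) * n) ∧
      ∀ a c : Fin p, (t ^ (a : ℕ))⁻¹ * t ^ (c : ℕ) ∈ N → a = c := by
  classical
  set M := N.subgroupOf Q with hM
  have hMcard : Nat.card M = Nat.card N := Nat.card_congr (Subgroup.subgroupOfEquivOfLe hNQ).toEquiv
  have hidx : M.index = p := by
    have := M.card_mul_index
    rw [hMcard, hcard] at this
    exact Nat.eq_of_mul_eq_mul_left Nat.card_pos this
  have hmin : (Nat.card Q).minFac = p := by
    obtain ⟨k, hk⟩ := IsPGroup.iff_card.1 (hP.to_subgroup Q)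
    rw [hk]
    refine Nat.Prime.pow_minFac hp.out ?_
    rintro rfl
    rw [pow_zero, hcard] at hk
    exact hp.out.one_lt.ne' (Nat.eq_one_of_mul_eq_one_left hk)
  have hnormal : M.Normal := Subgroup.normal_of_index_eq_minFac_card (hidx.trans hmin.symm)
  have hqc : Nat.card (Q ⧸ M) = p := hidx
  have : Nontrivial (Q ⧸ M) := by
    rw [← Finite.one_lt_card_iff_nontrivial, hqc]; exact hp.out.one_lt
  obtain ⟨q, hq⟩ := exists_ne (1 : Q ⧸ M)
  obtain ⟨t, rfl⟩ := QuotientGroup.mk_surjective q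
  have hord : orderOf (t : Q ⧸ M) = p := by
    refine orderOf_eq_prime ?_ hq
    rw [← hqc]; exact pow_card_eq_one'
  have hmem : ∀ a b : Q, (a : P)⁻¹ * b ∈ N ↔ (a : Q ⧸ M) = b := by
    intro a b
    rw [QuotientGroup.eq, hM, Subgroup.mem_subgroupOf]; simp
  refine ⟨t, t.2, ?_, ?_, ?_⟩
  · intro n hn c
    have := hnormal.conj_mem ⟨n, hNQ hn⟩ (by simpa [hM, Subgroup.mem_subgroupOf] using hn) (t ^ c)
    simpa [hM, Subgroup.mem_subgroupOf] using this
  · intro g hg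
    have h1 : ((⟨g, hg⟩ : Q) : Q ⧸ M) ∈ Subgroup.zpowers (t : Q ⧸ M) :=
      mem_zpowers_of_prime_card hqc hq
    rw [mem_zpowers_iff_mem_range_orderOf, hord] at h1
    obtain ⟨c, hc, h⟩ := Finset.mem_image.1 h1
    refine ⟨⟨c, Finset.mem_range.1 hc⟩, ((t : P) ^ c)⁻¹ * g, ?_, by simp⟩
    have := (hmem (t ^ c) ⟨g, hg⟩).2 (by simpa using h)
    simpa using this
  · intro a c h
    have h1 := (hmem (t ^ (a : ℕ)) (t ^ (c : ℕ))).1 (by simpa using h)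
    have h2 : (t : Q ⧸ M) ^ (a : ℕ) = (t : Q ⧸ M) ^ (c : ℕ) := by simpa using h1
    exact Fin.ext (pow_injOn_Iio_orderOf (by simp [hord]) (by simp [hord]) h2)

/-- Coordinates on the orbit of `x₀` under a subgroup `Q`, indexed by a product of `k` chains of
length `p`, together with a linear ranking `R` of the index set, such that the element carrying
the point `j` to a point `j' ≥ j` carries points ranked below `j` to points ranked below `j'`. -/
structure IsRankedOrbit {P Ω : Type*} [Group P] [MulAction P Ω] (Q : Subgroup P) (x₀ : Ω)
    {k p : ℕ} (ρ : (Fin k → Fin p) → P) (R : (Fin k → Fin p) → ℕ) : Prop where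
  mem : ∀ j, ρ j ∈ Q
  exists_eq : ∀ g ∈ Q, ∃ j, ρ j • x₀ = g • x₀
  injective : ∀ i j, ρ i • x₀ = ρ j • x₀ → i = j
  rank_injective : Function.Injective R
  rank_lt : ∀ j, R j < p ^ k
  rank_mono : ∀ i j, i ≤ j → R i ≤ R j
  shift : ∀ i j, i ≤ j → ∀ z, R z < R i →
    ∃ z', R z' < R j ∧ (ρ j * (ρ i)⁻¹ * ρ z) • x₀ = ρ z' • x₀

theorem IsRankedOrbit.succ {P Ω : Type*} [Group P] [Finite P] [MulAction P Ω] {p : ℕ}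
    [hp : Fact p.Prime] (hP : IsPGroup p P) {N Q : Subgroup P} (hNQ : N ≤ Q)
    (hcard : Nat.card Q = Nat.card N * p) {x₀ : Ω} (hstab : MulAction.stabilizer P x₀ ≤ N)
    {k : ℕ} {ρ : (Fin k → Fin p) → P} {R : (Fin k → Fin p) → ℕ} (h : IsRankedOrbit N x₀ ρ R) :
    ∃ (ρ' : (Fin (k + 1) → Fin p) → P) (R' : (Fin (k + 1) → Fin p) → ℕ),
      IsRankedOrbit Q x₀ ρ' R' := by
  obtain ⟨t, htQ, hconj, hex, hinj⟩ := exists_transversal_of_card_eq_prime_mul hP hNQ hcard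
  have key : ∀ a b M x y : ℕ, x < M → y < M → a * M + x < b * M + y → a < b ∨ a = b ∧ x < y := by
    intro a b M x y hx hy hlt
    rcases lt_trichotomy a b with hab | hab | hab
    · exact Or.inl hab
    · subst hab; exact Or.inr ⟨rfl, by omega⟩
    · exfalso
      have : (b + 1) * M ≤ a * M := Nat.mul_le_mul_right _ hab
      rw [add_mul] at this
      omega
  have key' : ∀ a b M x y : ℕ, x < M → a < b → a * M + x < b * M + y := by
    intro a b M x y hx hab
    have : (a + 1) * M ≤ b * M := Nat.mul_le_mul_right _ hab
    rw [add_mul] at this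
    omega
  refine ⟨fun j => t ^ (j 0 : ℕ) * ρ (Fin.tail j), fun j => j 0 * p ^ k + R (Fin.tail j),
    ?_, ?_, ?_, ?_, ?_, ?_, ?_⟩
  · intro j
    exact Q.mul_mem (Q.pow_mem htQ _) (hNQ (h.mem _))
  · intro g hg
    obtain ⟨c, n, hn, rfl⟩ := hex g hg
    obtain ⟨j, hj⟩ := h.exists_eq n hn
    refine ⟨Fin.cons c j, ?_⟩
    simp [mul_smul, hj]
  · intro i j hij
    have h1 : (t ^ (i 0 : ℕ) * ρ (Fin.tail i))⁻¹ * (t ^ (j 0 : ℕ) * ρ (Fin.tail j)) ∈ N := by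
      apply hstab
      rw [MulAction.mem_stabilizer_iff, mul_smul, ← hij, inv_smul_smul]
    have h2 : i 0 = j 0 := by
      apply hinj
      have := N.mul_mem (N.mul_mem (h.mem (Fin.tail i)) h1) (N.inv_mem (h.mem (Fin.tail j)))
      simpa [mul_assoc] using this
    simp only [mul_smul, h2] at hij
    have h3 := h.injective _ _ (smul_left_cancel _ hij)
    rw [← Fin.cons_self_tail i, ← Fin.cons_self_tail j, h2, h3]
  · intro i j hij
    simp only at hij
    have h2 : (i 0 : ℕ) = j 0 := by
      rcases lt_trichotomy (i 0 : ℕ) (j 0) with hab | hab | hab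
      · exact absurd hij (key' _ _ _ _ _ (h.rank_lt _) hab).ne
      · exact hab
      · exact absurd hij (key' _ _ _ _ _ (h.rank_lt _) hab).ne'
    rw [h2] at hij
    have h3 := h.rank_injective (Nat.add_left_cancel hij)
    rw [← Fin.cons_self_tail i, ← Fin.cons_self_tail j, Fin.ext h2, h3]
  · intro j
    have := key' (j 0) p (p ^ k) (R (Fin.tail j)) 0 (h.rank_lt _) (j 0).2
    rw [pow_succ']
    simpa using this
  · intro i j hij
    have h1 : (i 0 : ℕ) ≤ j 0 := hij 0
    have h2 := h.rank_mono (Fin.tail i) (Fin.tail j) (fun l => hij l.succ)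
    exact Nat.add_le_add (Nat.mul_le_mul_right _ h1) h2
  · intro i j hij z hz
    have h1 : (i 0 : ℕ) ≤ j 0 := hij 0
    have h2 : Fin.tail i ≤ Fin.tail j := fun l => hij l.succ
    rcases key _ _ _ _ _ (h.rank_lt _) (h.rank_lt _) hz with hlt | ⟨heq, hlt⟩
    · obtain ⟨d, hd⟩ := Nat.exists_eq_add_of_lt hlt
      obtain ⟨e, he⟩ := Nat.exists_eq_add_of_le (show d + 1 ≤ j 0 by omega)
      have hn := N.mul_mem (hconj _ (N.mul_mem (h.mem (Fin.tail j))
        (N.inv_mem (h.mem (Fin.tail i)))) (d + 1)) (h.mem (Fin.tail z))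
      obtain ⟨z', hz'⟩ := h.exists_eq _ hn
      refine ⟨Fin.cons ⟨e, by omega⟩ z', ?_, ?_⟩
      · simp only [Fin.cons_zero, Fin.tail_cons]
        exact key' _ _ _ _ _ (h.rank_lt _) (by omega)
      · simp only [Fin.cons_zero, Fin.tail_cons]
        rw [mul_smul _ (ρ z'), hz', ← mul_smul, hd, he]
        congr 1
        rw [add_comm (d + 1) e, add_assoc, pow_add t e, pow_add t (z 0 : ℕ)]
        group
    · obtain ⟨z', hz', he⟩ := h.shift _ _ h2 _ hlt
      refine ⟨Fin.cons (j 0) z', by simpa using hz', ?_⟩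
      simp only [heq, Fin.cons_zero, Fin.tail_cons, mul_smul _ (ρ z'), ← he, ← mul_smul]
      congr 1
      group

theorem exists_isRankedOrbit {P Ω : Type*} [Group P] [Finite P] [MulAction P Ω] {p : ℕ}
    [hp : Fact p.Prime] (hP : IsPGroup p P) (x₀ : Ω) :
    ∃ (k : ℕ) (ρ : (Fin k → Fin p) → P) (R : (Fin k → Fin p) → ℕ),
      IsRankedOrbit ⊤ x₀ ρ R := by
  obtain ⟨s, hs⟩ := IsPGroup.iff_card.1 (hP.to_subgroup (MulAction.stabilizer P x₀))
  obtain ⟨m, hm⟩ := IsPGroup.iff_card.1 hP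
  have hsm : s ≤ m := (Nat.pow_dvd_pow_iff_le_right hp.out.one_lt).1
    (hs ▸ hm ▸ Subgroup.card_subgroup_dvd_card _)
  have main : ∀ k, s + k ≤ m → ∃ Q : Subgroup P, Nat.card Q = p ^ (s + k) ∧
      MulAction.stabilizer P x₀ ≤ Q ∧ ∃ (ρ : (Fin k → Fin p) → P) (R : (Fin k → Fin p) → ℕ),
      IsRankedOrbit Q x₀ ρ R := by
    intro k
    induction k with
    | zero =>
      intro _
      refine ⟨_, hs, le_rfl, fun _ => 1, fun _ => 0, ?_, ?_, ?_, ?_, ?_, ?_, ?_⟩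
      · exact fun _ => one_mem _
      · exact fun g hg => ⟨Fin.elim0, by rw [one_smul, MulAction.mem_stabilizer_iff.1 hg]⟩
      · exact fun _ _ _ => Subsingleton.elim _ _
      · exact fun _ _ _ => Subsingleton.elim _ _
      · simp
      · simp
      · simp
    | succ k ih =>
      intro hk
      obtain ⟨N, hN, hsN, ρ, R, h⟩ := ih (by omega)
      obtain ⟨Q, hQ, hNQ⟩ := Sylow.exists_subgroup_card_pow_succ
        (hm ▸ pow_dvd_pow p (by omega : s + k + 1 ≤ m)) hN
      exact ⟨Q, hQ, hsN.trans hNQ, h.succ hP hNQ (by rw [hQ, hN, pow_succ]) hsN⟩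
  obtain ⟨Q, hQ, -, ρ, R, h⟩ := main (m - s) (by omega)
  rw [show s + (m - s) = m by omega, ← hm] at hQ
  rw [Subgroup.card_eq_iff_eq_top] at hQ
  exact ⟨m - s, ρ, R, hQ ▸ h⟩

theorem IsRankedOrbit.pow_mul_card_stabilizer {P Ω : Type*} [Group P] [Finite P] [MulAction P Ω]
    {k p : ℕ} {x₀ : Ω} {ρ : (Fin k → Fin p) → P} {R : (Fin k → Fin p) → ℕ}
    (h : IsRankedOrbit ⊤ x₀ ρ R) :
    Nat.card (MulAction.stabilizer P x₀) * p ^ k = Nat.card P := by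
  classical
  rw [← (MulAction.stabilizer P x₀).card_mul_index, MulAction.index_stabilizer]
  congr 1
  have : MulAction.orbit P x₀ = Set.range fun j => ρ j • x₀ := by
    ext y
    constructor
    · rintro ⟨g, rfl⟩
      exact h.exists_eq g trivial
    · rintro ⟨j, rfl⟩
      exact MulAction.mem_orbit _ _
  rw [this, Set.ncard_eq_toFinset_card', Set.toFinset_range,
    Finset.card_image_of_injective _ fun i j => h.injective i j]
  simp

theorem IsRankedOrbit.factorization_index_le {G : Type*} [Group G] [Finite G] {H : Subgroup G}
    {k p : ℕ} [hp : Fact p.Prime] (P : Sylow p G) {x₀ : G ⧸ H} {ρ : (Fin k → Fin p) → (P : Subgroup G)}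
    {R : (Fin k → Fin p) → ℕ} (h : IsRankedOrbit ⊤ x₀ ρ R) : H.index.factorization p ≤ k := by
  have h1 := h.pow_mul_card_stabilizer.trans P.card_eq_multiplicity
  obtain ⟨s, hs⟩ := IsPGroup.iff_card.1 (P.2.to_subgroup (MulAction.stabilizer (P : Subgroup G) x₀))
  have h2 : Nat.card (MulAction.stabilizer (P : Subgroup G) x₀) ∣ Nat.card (MulAction.stabilizer G x₀) := by
    rw [← Subgroup.card_map_of_injective (K := MulAction.stabilizer (P : Subgroup G) x₀)
      (Subgroup.subtype_injective (P : Subgroup G))]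
    refine Subgroup.card_dvd_of_le ?_
    rintro _ ⟨g, hg, rfl⟩
    exact hg
  have h3 := (MulAction.stabilizer G x₀).card_mul_index
  rw [MulAction.index_stabilizer_of_transitive, ← Subgroup.index_eq_card] at h3
  have h4 : Nat.card (MulAction.stabilizer G x₀) ≠ 0 := Nat.card_pos.ne'
  rw [← h3, Nat.factorization_mul h4 H.index_ne_zero_of_finite, hs, ← pow_add] at h1
  have h5 := Nat.pow_right_injective hp.out.two_le h1
  rw [hs, hp.out.pow_dvd_iff_le_factorization h4] at h2
  simp only [Finsupp.add_apply] at h5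
  omega

/-- `Dominates r rank x y`: the element `r y * (r x)⁻¹`, which carries `x` to `y`, carries all
points ranked below `x` to points ranked below `y`. -/
def Dominates {G Ω : Type*} [Group G] [MulAction G Ω] (r : Ω → G) (rank : Ω → ℕ) (x y : Ω) : Prop :=
  rank x ≤ rank y ∧ ∀ z, rank z < rank x → rank ((r y * (r x)⁻¹) • z) < rank y

theorem exists_ranked_section {G : Type*} [Group G] [Finite G] (H : Subgroup G) (p : ℕ)
    [hp : Fact p.Prime] :
    ∃ (r : G ⧸ H → G) (rank : G ⧸ H → ℕ), (∀ x, (r x : G ⧸ H) = x) ∧ Function.Injective rank ∧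
      ∀ A : Finset (G ⧸ H), (∀ x ∈ A, ∀ y ∈ A, Dominates r rank x y → x = y) →
        (A.card : ℝ) * √(H.index.factorization p) ≤ √(2 / Real.pi) * H.index := by
  classical
  have P : Sylow p G := default
  let I := MulAction.orbitRel.Quotient P (G ⧸ H)
  have : Fintype I := Fintype.ofFinite I
  have : Fintype (G ⧸ H) := Fintype.ofFinite _
  choose k ρ R h using fun i : I => exists_isRankedOrbit P.2 (Quotient.out i : G ⧸ H)
  let f : (Σ i, Fin (k i) → Fin p) → G ⧸ H := fun s => ρ s.1 s.2 • (Quotient.out s.1 : G ⧸ H)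
  have horb : ∀ (g : P) (i : I), (Quotient.mk'' (g • (Quotient.out i : G ⧸ H)) : I) = i := by
    intro g i
    conv_rhs => rw [← Quotient.out_eq i]
    exact Quotient.sound (MulAction.mem_orbit _ _)
  have hf : Function.Bijective f := by
    constructor
    · rintro ⟨i, a⟩ ⟨j, b⟩ hab
      have hij : i = j := by
        rw [← horb (ρ i a) i, ← horb (ρ j b) j]
        exact congrArg _ hab
      subst hij
      exact congrArg (Sigma.mk i) ((h i).injective _ _ hab)
    · intro x
      have hx : (MulAction.orbitRel P (G ⧸ H)) (Quotient.out (Quotient.mk'' x : I)) x :=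
        Quotient.exact (Quotient.out_eq (Quotient.mk'' x : I))
      obtain ⟨g, hg⟩ := (MulAction.orbitRel P (G ⧸ H)).symm hx
      obtain ⟨j, hj⟩ := (h (Quotient.mk'' x)).exists_eq g trivial
      exact ⟨⟨_, j⟩, hj.trans hg⟩
  let e := Equiv.ofBijective f hf
  have hcard : ∑ i, p ^ k i = H.index := by
    rw [Subgroup.index_eq_card, ← Nat.card_congr e]
    simp
  have hM : ∀ i a, R i a < H.index := fun i a => ((h i).rank_lt a).trans_le
    (hcard ▸ Finset.single_le_sum (f := fun i => p ^ k i) (fun _ _ => Nat.zero_le _)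
      (Finset.mem_univ i))
  let idx := Fintype.equivFin I
  let r : G ⧸ H → G := fun x => (ρ (e.symm x).1 (e.symm x).2 : G) * (Quotient.out (e.symm x).1).out
  let rank : G ⧸ H → ℕ := fun x => idx (e.symm x).1 * H.index + R (e.symm x).1 (e.symm x).2
  have key : ∀ a b x y : ℕ, x < H.index → a < b → a * H.index + x < b * H.index + y := by
    intro a b x y hx hab
    have : (a + 1) * H.index ≤ b * H.index := Nat.mul_le_mul_right _ hab
    rw [add_mul] at this
    omega
  have hr : ∀ i a, r (e ⟨i, a⟩) = ρ i a * (Quotient.out i).out := by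
    intro i a; simp only [r]; rw [e.symm_apply_apply]
  have hrank : ∀ i a, rank (e ⟨i, a⟩) = idx i * H.index + R i a := by
    intro i a; simp only [rank]; rw [e.symm_apply_apply]
  have he : ∀ i a, e ⟨i, a⟩ = ρ i a • (Quotient.out i : G ⧸ H) := fun _ _ => rfl
  have hdom : ∀ i a b, a ≤ b → Dominates r rank (e ⟨i, a⟩) (e ⟨i, b⟩) := by
    intro i a b hab
    refine ⟨?_, ?_⟩
    · rw [hrank, hrank]
      exact Nat.add_le_add_left ((h i).rank_mono _ _ hab) _
    · intro z hz
      obtain ⟨⟨j, c⟩, rfl⟩ := e.surjective z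
      rw [hr, hr, hrank]
      rw [hrank, hrank] at hz
      have hg : ((ρ i b : G) * (Quotient.out i).out * ((ρ i a : G) * (Quotient.out i).out)⁻¹) •
          e ⟨j, c⟩ = (ρ i b * (ρ i a)⁻¹ * ρ j c) • (Quotient.out j : G ⧸ H) := by
        rw [he, mul_smul _ (ρ j c)]
        generalize ρ j c • (Quotient.out j : G ⧸ H) = w
        change _ = ((ρ i b : G) * (ρ i a : G)⁻¹) • w
        congr 1
        group
      rw [hg]
      rcases lt_trichotomy (idx j : ℕ) (idx i) with hlt | heq | hgt
      · obtain ⟨c', hc'⟩ := (h j).exists_eq (ρ i b * (ρ i a)⁻¹ * ρ j c) trivial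
        rw [← hc', ← he, hrank]
        exact key _ _ _ _ (hM _ _) hlt
      · obtain rfl : j = i := idx.injective (Fin.ext heq)
        obtain ⟨z', hz', hz''⟩ := (h j).shift _ _ hab c (by omega)
        rw [hz'', ← he, hrank]
        omega
      · exact absurd hz (key _ _ _ _ (hM _ _) hgt).not_gt
  refine ⟨r, rank, ?_, ?_, ?_⟩
  · intro x
    obtain ⟨⟨i, a⟩, rfl⟩ := e.surjective x
    rw [hr, he]
    conv_rhs => rw [← QuotientGroup.out_eq' (Quotient.out i : G ⧸ H)]
    rfl
  · intro x y hxy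
    obtain ⟨⟨i, a⟩, rfl⟩ := e.surjective x
    obtain ⟨⟨j, b⟩, rfl⟩ := e.surjective y
    rw [hrank, hrank] at hxy
    rcases lt_trichotomy (idx i : ℕ) (idx j) with hlt | heq | hgt
    · exact absurd hxy (key _ _ _ _ (hM _ _) hlt).ne
    · obtain rfl : i = j := idx.injective (Fin.ext heq)
      rw [(h i).rank_injective (Nat.add_left_cancel hxy)]
    · exact absurd hxy (key _ _ _ _ (hM _ _) hgt).ne'
  · intro A hA
    let B : ∀ i, Finset (Fin (k i) → Fin p) := fun i => Finset.univ.filter fun a => e ⟨i, a⟩ ∈ A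
    have hB : ∀ i, ((B i).card : ℝ) * √(H.index.factorization p) ≤ √(2 / Real.pi) * p ^ k i := by
      intro i
      refine card_antichain_mul_sqrt_le hp.out.two_le ((h i).factorization_index_le P) _ ?_
      intro a ha b hb hab hle
      simp only [B, Finset.coe_filter, Finset.mem_univ, true_and, Set.mem_ofPred_eq] at ha hb
      have := e.injective (hA _ ha _ hb (hdom i a b hle))
      exact hab (by simpa using this)
    have hAB : A.card = ∑ i, (B i).card := by
      rw [← Finset.card_sigma]
      refine (Finset.card_bij (fun s _ => e s) ?_ (fun _ _ _ _ hs => e.injective hs) ?_).symm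
      · rintro ⟨i, a⟩ hs
        simpa [B] using hs
      · intro x hx
        exact ⟨e.symm x, by simpa [B] using hx, by simp⟩
    have hcard' : (H.index : ℝ) = ∑ i, (p : ℝ) ^ k i := by rw [← hcard]; push_cast; rfl
    rw [hAB, hcard', Nat.cast_sum, Finset.sum_mul, Finset.mul_sum]
    exact Finset.sum_le_sum fun i _ => hB i

section LeadingTerms

variable {G Ω F W : Type*} [Group G] [Field F] [AddCommGroup W] [Module F W]
  [DistribMulAction G W]

/-- The sum of the components `φ z` over the points `z` of rank less than `N`. -/
def rankBelow (φ : Ω → Submodule F W) (rank : Ω → ℕ) (N : ℕ) : Submodule F W :=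
  ⨆ z, ⨆ _ : rank z < N, φ z

/-- The vectors `v` such that `r x • v` is the leading term of an element of `S`. -/
def leadingSet (φ : Ω → Submodule F W) (r : Ω → G) (rank : Ω → ℕ) (S : Submodule F W) (x : Ω) :
    Set W :=
  {v | ∃ s ∈ S, s - r x • v ∈ rankBelow φ rank (rank x)}

theorem le_rankBelow {φ : Ω → Submodule F W} {rank : Ω → ℕ} {N : ℕ} {z : Ω} (hz : rank z < N) :
    φ z ≤ rankBelow φ rank N :=
  le_iSup₂_of_le z hz le_rfl

variable [SMulCommClass G F W] {φ : Ω → Submodule F W} {r : Ω → G} {rank : Ω → ℕ}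
  {S T : Submodule F W}

theorem le_of_leadingSet_subset [Finite Ω] {V : Submodule F W} (hrank : Function.Injective rank)
    (hφV : ∀ x, φ x = V.map (DistribSMul.toLinearMap F W (r x))) (htop : iSup φ = ⊤)
    (hTS : T ≤ S)
    (h : ∀ x, ∀ v ∈ V, v ∈ leadingSet φ r rank S x → v ∈ leadingSet φ r rank T x) : S ≤ T := by
  have main : ∀ N, ∀ s ∈ S, s ∈ rankBelow φ rank N → s ∈ T := by
    intro N
    induction N with
    | zero =>
      intro s _ hs
      have : s = 0 := by simpa [rankBelow] using hs
      exact this ▸ T.zero_mem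
    | succ N ih =>
      intro s hsS hs
      by_cases hx : ∃ x, rank x = N
      · obtain ⟨x, rfl⟩ := hx
        have hle : rankBelow φ rank (rank x + 1) ≤ φ x ⊔ rankBelow φ rank (rank x) := by
          refine iSup₂_le fun z hz => ?_
          rcases (Nat.lt_succ_iff.1 hz).lt_or_eq with hlt | heq
          · exact (le_rankBelow hlt).trans le_sup_right
          · rw [hrank heq]; exact le_sup_left
        obtain ⟨u, hu, l, hl, rfl⟩ := Submodule.mem_sup.1 (hle hs)
        rw [hφV] at hu
        obtain ⟨v, hv, rfl⟩ := hu
        obtain ⟨t, ht, htv⟩ := h x v hv ⟨_, hsS, by simpa using hl⟩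
        have h1 := ih _ (S.sub_mem hsS (hTS ht)) (by
          have := Submodule.sub_mem _ hl htv
          convert this using 1
          simp only [DistribSMul.toLinearMap_apply]
          abel)
        simpa using T.add_mem h1 ht
      · refine ih s hsS ((iSup₂_le fun z hz => ?_ : rankBelow φ rank (N + 1) ≤ _) hs)
        exact le_rankBelow ((Nat.lt_succ_iff.1 hz).lt_of_ne fun h => hx ⟨z, h⟩)
  intro s hs
  obtain ⟨N, hN⟩ := (Set.finite_range rank).bddAbove
  refine main (N + 1) s hs ?_
  have : (⊤ : Submodule F W) ≤ rankBelow φ rank (N + 1) := by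
    rw [← htop]
    exact iSup_le fun z => le_rankBelow (Nat.lt_succ_of_le (hN ⟨z, rfl⟩))
  exact this trivial

variable [MulAction G Ω]

theorem smul_mem_rankBelow (hφ : ∀ (g : G) z, ∀ w ∈ φ z, g • w ∈ φ (g • z)) {g : G} {M N : ℕ}
    (hg : ∀ z, rank z < M → rank (g • z) < N) {w : W} (hw : w ∈ rankBelow φ rank M) :
    g • w ∈ rankBelow φ rank N := by
  have : rankBelow φ rank M ≤
      (rankBelow φ rank N).comap (DistribSMul.toLinearMap F W g) :=
    iSup₂_le fun z hz w hw => le_rankBelow (hg z hz) (hφ g z w hw)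
  exact this hw

theorem leadingSet_mono_of_dominates (hφ : ∀ (g : G) z, ∀ w ∈ φ z, g • w ∈ φ (g • z))
    (hS : ∀ g : G, ∀ w ∈ S, g • w ∈ S) {x y : Ω} (hxy : Dominates r rank x y) :
    leadingSet φ r rank S x ⊆ leadingSet φ r rank S y := by
  rintro v ⟨s, hs, hv⟩
  refine ⟨(r y * (r x)⁻¹) • s, hS _ _ hs, ?_⟩
  have := smul_mem_rankBelow hφ hxy.2 hv
  rwa [smul_sub, smul_smul, inv_mul_cancel_right] at this

theorem smul_mem_leadingSet (hφ : ∀ (g : G) z, ∀ w ∈ φ z, g • w ∈ φ (g • z))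
    (hS : ∀ g : G, ∀ w ∈ S, g • w ∈ S) {K : Subgroup G} [hK : K.Normal]
    (hfix : ∀ g ∈ K, ∀ z : Ω, g • z = z) {x : Ω} {v : W} {g : G} (hg : g ∈ K)
    (hv : v ∈ leadingSet φ r rank S x) : g • v ∈ leadingSet φ r rank S x := by
  obtain ⟨s, hs, hv⟩ := hv
  refine ⟨(r x * g * (r x)⁻¹) • s, hS _ _ hs, ?_⟩
  have := smul_mem_rankBelow (rank := rank) (g := r x * g * (r x)⁻¹) (N := rank x) hφ
    (fun z hz => by rwa [hfix _ (hK.conj_mem g hg (r x))]) hv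
  rwa [smul_sub, smul_smul, inv_mul_cancel_right, ← smul_smul (r x) g v] at this

end LeadingTerms

/-- Every subset of a finite ranked set is dominated by the set of its minimal elements. -/
theorem exists_minimal_dominating {G Ω : Type*} [Group G] [MulAction G Ω] [Finite Ω] (r : Ω → G)
    {rank : Ω → ℕ} (hrank : Function.Injective rank) (U : Set Ω) :
    ∃ A : Finset Ω, (A : Set Ω) ⊆ U ∧ (∀ x ∈ A, ∀ y ∈ A, Dominates r rank x y → x = y) ∧
      ∀ u ∈ U, ∃ a ∈ A, Dominates r rank a u := by
  let A : Set Ω := {x | x ∈ U ∧ ∀ y ∈ U, Dominates r rank y x → y = x}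
  refine ⟨(Set.toFinite A).toFinset, fun x hx => ?_, fun x hx y hy hxy => ?_, ?_⟩
  · exact ((Set.toFinite A).mem_toFinset.1 hx).1
  · rw [Set.Finite.mem_toFinset] at hx hy
    exact hy.2 x hx.1 hxy
  · intro u
    induction hN : rank u using Nat.strong_induction_on generalizing u with
    | _ N ih =>
      intro hu
      subst hN
      by_cases huA : u ∈ A
      · exact ⟨u, (Set.toFinite A).mem_toFinset.2 huA, le_rfl, fun z hz => by simpa using hz⟩
      · have : ∃ y ∈ U, Dominates r rank y u ∧ y ≠ u := by
          by_contra! hcon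
          exact huA ⟨hu, hcon⟩
        obtain ⟨y, hy, hyu, hne⟩ := this
        obtain ⟨a, ha, hay⟩ := ih (rank y) (hyu.1.lt_of_ne fun h => hne (hrank h)) y rfl hy
        refine ⟨a, ha, hay.1.trans hyu.1, fun z hz => ?_⟩
        have := hyu.2 _ (hay.2 z hz)
        rwa [smul_smul, mul_assoc, inv_mul_cancel_left] at this

theorem dMod_le_of_antichain_card_le {G Ω F W : Type*} [Group G] [MulAction G Ω] [Finite Ω]
    [Field F] [AddCommGroup W] [Module F W] [DistribMulAction G W] [SMulCommClass G F W]
    {φ : Ω → Submodule F W} {r : Ω → G} {rank : Ω → ℕ} {S V : Submodule F W}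
    (hφ : ∀ (g : G) z, ∀ w ∈ φ z, g • w ∈ φ (g • z)) (hrank : Function.Injective rank)
    (hφV : ∀ x, φ x = V.map (DistribSMul.toLinearMap F W (r x))) (htop : iSup φ = ⊤)
    (hS : ∀ g : G, ∀ w ∈ S, g • w ∈ S) {K : Subgroup G} [K.Normal]
    (hfix : ∀ g ∈ K, ∀ z : Ω, g • z = z) {m : ℕ}
    (hm : ∀ A : Finset Ω, (∀ x ∈ A, ∀ y ∈ A, Dominates r rank x y → x = y) → A.card ≤ m)
    {orbs : Set (Set W)}
    (horbs : orbs = {s : Set W | ∃ v ∈ (V : Set W), v ≠ 0 ∧ s = {w : W | ∃ g ∈ K, g • v = w}})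
    (hfin : orbs.Finite) : dMod G S ≤ Nat.card orbs * m := by
  classical
  have hrep : ∀ o : Set W, ∃ v : W, o ∈ orbs → v ∈ o := by
    intro o
    by_cases ho : o ∈ orbs
    · obtain ⟨v, -, -, rfl⟩ := horbs ▸ ho
      exact ⟨v, fun _ => ⟨1, K.one_mem, one_smul _ _⟩⟩
    · exact ⟨0, fun h => absurd h ho⟩
  choose v hv using hrep
  choose A hAU hA hdom using fun o : Set W =>
    exists_minimal_dominating r hrank {x | v o ∈ leadingSet φ r rank S x}
  have hlift : ∀ o x, ∃ s : W, x ∈ A o → s ∈ S ∧ s - r x • v o ∈ rankBelow φ rank (rank x) := by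
    intro o x
    by_cases hx : x ∈ A o
    · obtain ⟨s, hs⟩ := hAU o hx
      exact ⟨s, fun _ => hs⟩
    · exact ⟨0, fun h => absurd h hx⟩
  choose s hs using hlift
  let B : Finset W := hfin.toFinset.biUnion fun o => (A o).image (s o)
  have hBS : ∀ t ∈ B, t ∈ S := by
    intro t ht
    obtain ⟨o, -, ht⟩ := Finset.mem_biUnion.1 ht
    obtain ⟨x, hx, rfl⟩ := Finset.mem_image.1 ht
    exact (hs o x hx).1
  have hBcard : B.card ≤ Nat.card orbs * m := by
    rw [Nat.card_coe_set_eq, Set.ncard_eq_toFinset_card _ hfin]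
    exact Finset.card_biUnion_le_card_mul _ _ _ fun o _ =>
      Finset.card_image_le.trans (hm _ (hA o))
  refine le_trans (Nat.sInf_le ⟨B, rfl, hBS, ?_⟩) hBcard
  set T := Submodule.span F {w : W | ∃ g : G, ∃ t ∈ B, w = g • t} with hT
  have hTS : T ≤ S := by
    rw [hT, Submodule.span_le]
    rintro _ ⟨g, t, ht, rfl⟩
    exact hS g t (hBS t ht)
  have hBT : ∀ t ∈ B, t ∈ T := fun t ht => Submodule.subset_span ⟨1, t, ht, (one_smul _ _).symm⟩
  have hTG : ∀ g : G, ∀ w ∈ T, g • w ∈ T := by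
    intro g w hw
    have : T ≤ T.comap (DistribSMul.toLinearMap F W g) := by
      conv_lhs => rw [hT]
      rw [Submodule.span_le]
      rintro _ ⟨g', t, ht, rfl⟩
      exact Submodule.subset_span ⟨g * g', t, ht, (mul_smul _ _ _).symm⟩
    exact this hw
  refine le_antisymm hTS (le_of_leadingSet_subset hrank hφV htop hTS ?_)
  intro x w hwV hw
  by_cases hw0 : w = 0
  · exact ⟨0, T.zero_mem, by simp [hw0]⟩
  · let o : Set W := {u | ∃ g ∈ K, g • w = u}
    have ho : o ∈ orbs := horbs ▸ ⟨w, hwV, hw0, rfl⟩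
    obtain ⟨g, hg, hgw⟩ := hv o ho
    have hvo : v o ∈ leadingSet φ r rank S x := hgw ▸ smul_mem_leadingSet hφ hS hfix hg hw
    obtain ⟨a, ha, hax⟩ := hdom o x hvo
    have h1 : v o ∈ leadingSet φ r rank T a :=
      ⟨s o a, hBT _ (Finset.mem_biUnion.2 ⟨o, hfin.mem_toFinset.2 ho,
        Finset.mem_image_of_mem _ ha⟩), (hs o a ha).2⟩
    have h2 := smul_mem_leadingSet hφ hTG hfix (K.inv_mem hg)
      (leadingSet_mono_of_dominates hφ hTG hax h1)
    rwa [← hgw, inv_smul_smul] at h2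

/-- Let `G` be a finite group, `H ≤ G` of index `n ≥ 2`, `F` a field of characteristic
`p > 0`, and `V` an `H`-module of finite dimension over `F`.  The induced module `V↑G` is
presented internally: `W` is a `G`-module containing an `H`-stable subspace `V` such that `W`
is the direct sum of the translates `g • V` over the cosets `g H ∈ G ⧸ H`.  Let
`K = core_G H`, and let `χ` be the number of orbits of `K` on the nonzero elements of `V`
(assumed finite).  If `K` is soluble and `n_p > 1`, then for every (`G`-stable) submodule `S`
of `W`, `d_G(S) ≤ χ·⌊b·n/√(log_p n_p)⌋`, where `b = √(2/π)`. -/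
theorem stmt_14 (G : Type*) [Group G] [Fintype G]
    (H : Subgroup G) (n : ℕ) (hn : 2 ≤ n) (hidx : H.index = n)
    (F W : Type*) [Field F] (p : ℕ) [Fact p.Prime] (hchar : CharP F p)
    [AddCommGroup W] [Module F W] [DistribMulAction G W] [SMulCommClass G F W]
    (V : Submodule F W) [FiniteDimensional F V]
    (hVstable : ∀ g ∈ H, ∀ v ∈ V, g • v ∈ V)
    (hinduced : ∃ φ : G ⧸ H → Submodule F W,
      (∀ g : G, φ (g : G ⧸ H) = V.map (DistribMulAction.toLinearMap F W g)) ∧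
        iSupIndep φ ∧ iSup φ = ⊤)
    (orbs : Set (Set W))
    (horbs : orbs = {s : Set W | ∃ v ∈ (V : Set W), v ≠ 0 ∧
      s = {w : W | ∃ g ∈ H.normalCore, g • v = w}})
    (hfin : orbs.Finite)
    (χ : ℕ) (hχ : χ = Nat.card orbs)
    (hKsol : IsSolvable H.normalCore)
    (hnp : 1 < p ^ n.factorization p)
    (S : Submodule F W) (hSstable : ∀ g : G, ∀ w ∈ S, g • w ∈ S) :
    dMod G S ≤
      χ * ⌊Real.sqrt (2 / Real.pi) * n /
        Real.sqrt (Real.logb p (p ^ n.factorization p))⌋₊ := by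
  obtain ⟨φ, hφ, -, htop⟩ := hinduced
  obtain ⟨r, rank, hr, hrank, hA⟩ := exists_ranked_section H p
  have hp : p.Prime := Fact.out
  have hm : 0 < n.factorization p := by
    by_contra h0
    simp [Nat.eq_zero_of_not_pos h0] at hnp
  have hlog : Real.logb p ((p : ℝ) ^ n.factorization p) = n.factorization p := by
    rw [Real.logb_pow, Real.logb_self_eq_one (by exact_mod_cast hp.one_lt), mul_one]
  rw [hlog, hχ]
  have hφsmul : ∀ (g : G) z, ∀ w ∈ φ z, g • w ∈ φ (g • z) := by
    intro g z w hw
    obtain ⟨x, rfl⟩ := QuotientGroup.mk_surjective z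
    rw [hφ] at hw
    obtain ⟨v, hv, rfl⟩ := hw
    rw [MulAction.Quotient.smul_coe, hφ]
    exact ⟨v, hv, mul_smul g x v⟩
  refine dMod_le_of_antichain_card_le (K := H.normalCore) (r := r) hφsmul hrank (fun x => ?_) htop hSstable
    ?_ (fun A h => ?_) horbs hfin
  · exact (congrArg φ (hr x)).symm.trans (hφ (r x))
  · intro g hg z
    obtain ⟨x, rfl⟩ := QuotientGroup.mk_surjective z
    rw [MulAction.Quotient.smul_coe, eq_comm, QuotientGroup.eq, smul_eq_mul, ← mul_assoc]
    have := H.normalCore_normal.conj_mem g hg x⁻¹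
    rw [inv_inv] at this
    exact H.normalCore_le this
  · have := hA A h
    rw [hidx] at this
    exact Nat.le_floor ((le_div_iff₀ (Real.sqrt_pos.2 (by exact_mod_cast hm))).2 this)
end
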